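/- A pair (X, Y) of topological spaces with Y ⊂ X is homeomorphic to the pair (ℓ₂(κ), ℓ₂ᶠ(κ)) for an infinite cardinal κ if and only if: (1) the space X is homeomorphic to ℓ₂(κ); (2) the space Y can be written as a countable union of finite-dimensional locally compact spaces; and (3) the space Y absorbs finite-dimensional compact subsets of X, in the sense that for each finite-dimensional compact subset K ⊂ X, each compact subset B ⊂ K ∩ Y, and each open cover 𝒰 of X there is a topological embedding h : K → Y such that h|B = id|B and h is 𝒰-near to the identity embedding id : K → X. -/

import Mathlib

/-!
Write `V = ℓ₂(κ)`. Two properties of a subset of `V` matter: being a countable union of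
finite-dimensional locally compact sets, and absorbing finite-dimensional compacta. The set `ℓ₂ᶠ(κ)`
has both (`l2fin_decomposition`, `l2fin_absorbsFD`), both are invariant under homeomorphisms of the
ambient space, and any two subsets `Y`, `Y'` of `V` with both properties are exchanged by a
homeomorphism of `V` (`exists_pair_homeomorph`). The theorem follows.

The geometric input is the unknotting of compacta in `V` (`unknot_compact`): an embedding `h : K → V`
of a compact set that is close to the identity and fixes `D ∩ K` pointwise, where `D` is compact,
extends to a homeomorphism of `V` close to the identity and supported near `K \ D`. After a small
homeomorphism the sets `K` and `h(K)` vanish on an infinite set `J` of coordinates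
(`exists_deficient_homeomorph`). Klee's trick then applies: `x ↦ h x` is the composition
`x ↦ x + j x ↦ h x + j x ↦ h x`, where `j` maps into the coordinates of `J`, vanishes on `D` and is
injective off it. Each of the three steps adds to a point a function of its remaining coordinates, so
it extends to a shear of `V` once a Dugundji-type extension theorem is available; cutoff functions
localize the shears.

Combined with absorption, unknotting yields homeomorphisms of `V`, arbitrarily close to the identity,
that take a finite-dimensional compactum into `Y` and fix a given locally finite-dimensional compact
`C ⊆ Y`. Such homeomorphisms with discrete supports can be glued. This is what makes uncountable `κ`
accessible: by Stone's well-ordering argument a locally compact finite-dimensional set is a countable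
union of discrete unions of finite-dimensional compacta (`exists_discrete_decomposition`), and each
discrete union is moved at once (`exists_discrete_move`). A back-and-forth construction over the
decompositions of `Y` and `Y'` produces homeomorphisms which, together with their inverses, converge
uniformly; the limit maps `Y` onto `Y'`.

Covering dimension enters only through the equivalence, for compact metric spaces, of finite
covering dimension with embeddability into some `ℝ^m`: one direction is the Menger–Nöbeling theorem
(`exists_injective_of_covDimLE`), the other uses grids of overlapping cubes
(`covDimLE_of_injective`).
-/

noncomputable section
open Set Topology

/-- The Hilbert cube `𝕀^ω`. -/
abbrev HilbertCube : Type := ℕ → Set.Icc (0:ℝ) 1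

/-- The Hilbert space `ℓ₂(ι)` of square-summable real families indexed by `ι`. -/
abbrev l2Space (ι : Type u) : Type u := ↥(lp (fun _ : ι => ℝ) 2)

/-- `ℓ₂ᶠ(ι)`: the set of finitely supported elements of `ℓ₂(ι)`,
i.e. the linear hull of the standard orthonormal basis. -/
def l2fin (ι : Type u) : Set (l2Space ι) := {x | {i | (x : ∀ _ : ι, ℝ) i ≠ 0}.Finite}

/-- The density `dens X` of a topological space: the smallest cardinality of a dense subset. -/
def dens (X : Type u) [TopologicalSpace X] : Cardinal.{u} :=
  sInf {c | ∃ s : Set X, Dense s ∧ Cardinal.mk s = c}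

/-- A family of sets is an open cover of the space. -/
def IsOpenCover {X : Type*} [TopologicalSpace X] (𝒰 : Set (Set X)) : Prop :=
  (∀ U ∈ 𝒰, IsOpen U) ∧ ⋃₀ 𝒰 = Set.univ

/-- The covering dimension of `X` is at most `n`: every open cover admits an open
refinement in which every point lies in at most `n + 1` members. -/
def CovDimLE (X : Type*) [TopologicalSpace X] (n : ℕ) : Prop :=
  ∀ 𝒰 : Set (Set X), IsOpenCover 𝒰 →
    ∃ 𝒱 : Set (Set X), IsOpenCover 𝒱 ∧ (∀ V ∈ 𝒱, ∃ U ∈ 𝒰, V ⊆ U) ∧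
      ∀ x : X, {V ∈ 𝒱 | x ∈ V}.Finite ∧ {V ∈ 𝒱 | x ∈ V}.ncard ≤ n + 1

/-- A topological space is finite-dimensional if it has finite covering dimension. -/
def TopFinDim (X : Type*) [TopologicalSpace X] : Prop := ∃ n, CovDimLE X n

/-- A closed set `A ⊆ X` is a `Z`-set if the maps of the Hilbert cube into `X`
missing `A` are dense in `C(𝕀^ω, X)` with the compact-open topology. -/
def IsZSet {X : Type*} [TopologicalSpace X] (A : Set X) : Prop :=
  IsClosed A ∧ Dense {f : C(HilbertCube, X) | Set.range f ∩ A = ∅}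

/-- `A` has infinite codimension in `B`: the linear hull of `A` has infinite
codimension in the linear hull of `B`. -/
def InfiniteCodimIn {E : Type*} [AddCommGroup E] [Module ℝ E] (A B : Set E) : Prop :=
  ¬ Module.Finite ℝ
    (↥(Submodule.span ℝ B) ⧸ (Submodule.span ℝ A).comap (Submodule.span ℝ B).subtype)

/-! ### Extension of maps off closed and compact sets -/

/-- Dugundji extension with control of the norm. Off `N` the extension is a continuous selection from the
convex hulls of the values of `f` at the points of `N` at distance less than `2 * infDist z N` from `z`. -/
theorem dugundji_extension {Z W : Type*} [MetricSpace Z] [NormedAddCommGroup W] [NormedSpace ℝ W]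
    {N : Set Z} (hN : IsClosed N) (f : N → W) (hf : Continuous f) (r : ℝ) (hr0 : 0 ≤ r)
    (hr : ∀ x, ‖f x‖ ≤ r) :
    ∃ G : Z → W, Continuous G ∧ (∀ x : N, G x = f x) ∧ ∀ z, ‖G z‖ ≤ r := by
  classical
  rcases N.eq_empty_or_nonempty with hne | hne
  · subst hne
    exact ⟨fun _ => 0, continuous_const, fun x => x.2.elim, fun _ => by simpa using hr0⟩
  let t : ↥(Nᶜ) → Set W := fun z =>
    convexHull ℝ (f '' {a : N | dist (z : Z) a < 2 * Metric.infDist (z : Z) N})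
  have hloc : ∀ z : ↥(Nᶜ), ∃ c : W, ∀ᶠ y in 𝓝 z, c ∈ t y := by
    intro z
    have hpos : 0 < Metric.infDist (z : Z) N :=
      (hN.notMem_iff_infDist_pos hne).1 z.2
    obtain ⟨a, haN, ha⟩ := (Metric.infDist_lt_iff hne).1
      (show Metric.infDist (z : Z) N < 2 * Metric.infDist (z : Z) N by linarith)
    refine ⟨f ⟨a, haN⟩, ?_⟩
    have hev : ∀ᶠ y : ↥(Nᶜ) in 𝓝 z, dist (y : Z) a < 2 * Metric.infDist (y : Z) N := by
      have h1 : Continuous fun y : ↥(Nᶜ) => dist (y : Z) a := by fun_prop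
      have h2 : Continuous fun y : ↥(Nᶜ) => 2 * Metric.infDist (y : Z) N :=
        ((Metric.continuous_infDist_pt N).comp continuous_subtype_val).const_mul 2
      exact (isOpen_lt h1 h2).mem_nhds ha
    filter_upwards [hev] with y hy
    exact subset_convexHull ℝ _ ⟨⟨a, haN⟩, hy, rfl⟩
  obtain ⟨g, hg⟩ := exists_continuous_forall_mem_convex_of_local_const
    (t := t) (fun z => convex_convexHull ℝ _) hloc
  let G : Z → W := fun z => if h : z ∈ N then f ⟨z, h⟩ else g ⟨z, h⟩
  have hGN : ∀ x : N, G x = f x := fun x => by simp [G]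
  have hGc : ∀ z (h : z ∉ N), G z = g ⟨z, h⟩ := fun z h => by simp [G, h]
  refine ⟨G, ?_, hGN, ?_⟩
  · rw [continuous_iff_continuousAt]
    intro z
    by_cases hz : z ∈ N
    · rw [Metric.continuousAt_iff]
      intro ε hε
      obtain ⟨δ, hδ, hfδ⟩ := Metric.continuousAt_iff.1 (hf.continuousAt (x := ⟨z, hz⟩)) ε hε
      refine ⟨δ / 3, by positivity, fun y hy => ?_⟩
      have hGz : G z = f ⟨z, hz⟩ := hGN ⟨z, hz⟩
      rw [hGz]
      by_cases hyN : y ∈ N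
      · rw [show G y = f ⟨y, hyN⟩ from hGN ⟨y, hyN⟩]
        apply hfδ
        rw [Subtype.dist_eq]
        simp only
        linarith
      · rw [hGc y hyN]
        have : t ⟨y, hyN⟩ ⊆ Metric.ball (f ⟨z, hz⟩) ε := by
          apply convexHull_min _ (convex_ball _ _)
          rintro _ ⟨a, ha, rfl⟩
          apply hfδ
          rw [Subtype.dist_eq]
          have h1 : Metric.infDist y N ≤ dist y z := Metric.infDist_le_dist_of_mem hz
          have h2 : dist y (a : Z) < 2 * Metric.infDist y N := ha
          have h3 := dist_triangle_left (a : Z) z y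
          simp only
          linarith
        exact this (hg ⟨y, hyN⟩)
    · have : ContinuousOn G Nᶜ := by
        rw [continuousOn_iff_continuous_domRestrict]
        have : Nᶜ.domRestrict G = g := by
          funext y
          exact hGc y y.2
        rw [this]
        exact g.continuous
      exact this.continuousAt (hN.isOpen_compl.mem_nhds hz)
  · intro z
    by_cases hz : z ∈ N
    · rw [show G z = f ⟨z, hz⟩ from hGN ⟨z, hz⟩]
      exact hr _
    · rw [hGc z hz]
      have : t ⟨z, hz⟩ ⊆ Metric.closedBall 0 r := by
        apply convexHull_min _ (convex_closedBall _ _)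
        rintro _ ⟨a, ha, rfl⟩
        simpa using hr a
      simpa using this (hg ⟨z, hz⟩)

/-- A map `ψ` on a compact set that is constant on the fibres of `φ` factors through `φ`, and the second
factor extends from `φ(K)` to the whole space with the same norm bound. -/
theorem exists_factor_extension {V Z W : Type*} [TopologicalSpace V] [MetricSpace Z]
    [NormedAddCommGroup W] [NormedSpace ℝ W] {K : Set V} (hK : IsCompact K)
    {φ : V → Z} {ψ : V → W} (hφ : ContinuousOn φ K) (hψ : ContinuousOn ψ K)
    (hfib : ∀ x ∈ K, ∀ y ∈ K, φ x = φ y → ψ x = ψ y) (r : ℝ) (hr0 : 0 ≤ r)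
    (hr : ∀ x ∈ K, ‖ψ x‖ ≤ r) :
    ∃ G : Z → W, Continuous G ∧ (∀ x ∈ K, G (φ x) = ψ x) ∧ ∀ z, ‖G z‖ ≤ r := by
  have : CompactSpace K := isCompact_iff_compactSpace.1 hK
  let q : K → ↥(φ '' K) := fun x => ⟨φ x, mem_image_of_mem φ x.2⟩
  have hq : Continuous q := by
    apply Continuous.subtype_mk
    exact hφ.domRestrict
  have hqs : Function.Surjective q := by
    rintro ⟨_, x, hx, rfl⟩
    exact ⟨⟨x, hx⟩, rfl⟩
  have hquot : IsQuotientMap q := hq.isClosedMap.isQuotientMap hq hqs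
  let f : ↥(φ '' K) → W := fun z => ψ (Function.surjInv hqs z : K)
  have hfq : ∀ x : K, f (q x) = ψ x := by
    intro x
    have := Function.surjInv_eq hqs (q x)
    exact hfib _ (Subtype.coe_prop _) _ x.2 (congrArg Subtype.val this)
  have hf : Continuous f := by
    rw [hquot.continuous_iff]
    have : f ∘ q = K.domRestrict ψ := funext hfq
    rw [this]
    exact hψ.domRestrict
  obtain ⟨G, hG, hGf, hGr⟩ := dugundji_extension (hK.image_of_continuousOn hφ).isClosed f hf r hr0
    (fun z => hr _ (Subtype.coe_prop _))
  refine ⟨G, hG, fun x hx => ?_, hGr⟩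
  have := hGf (q ⟨x, hx⟩)
  rw [hfq] at this
  exact this

/-! ### Shear homeomorphisms -/

/-- If `F` takes values in the kernel of a projection `P` and is `1/2`-Lipschitz along the fibres of `P`,
then `p ↦ p + F p` is a homeomorphism: it preserves each fibre of `P`, where it is a contractive
perturbation of the identity. -/
theorem exists_shear_homeomorph {E : Type*} [NormedAddCommGroup E] [NormedSpace ℝ E]
    [CompleteSpace E] (P : E →L[ℝ] E) (hPP : ∀ x, P (P x) = P x)
    (hQ : ∀ x, ‖x - P x‖ ≤ ‖x‖) (F : E → E) (hF : Continuous F) (hPF : ∀ p, P (F p) = 0)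
    (hlip : ∀ p q, P p = P q → ‖F p - F q‖ ≤ 1 / 2 * ‖p - q‖) :
    ∃ S : E ≃ₜ E, ∀ p, S p = p + F p := by
  have hPQ : ∀ z q, P (P z + (q - P q)) = P z := by
    intro z q
    simp [hPP]
  have hinj : Function.Injective fun p => p + F p := by
    intro p p' h
    have h : p + F p = p' + F p' := h
    have hP : P p = P p' := by
      have := congrArg P h
      simpa [hPF] using this
    have h1 := hlip p p' hP
    have h2 : p - p' = -(F p - F p') := by
      rw [neg_sub, sub_eq_sub_iff_add_eq_add, h, add_comm]
    have h3 : ‖p - p'‖ = ‖F p - F p'‖ := by rw [h2, norm_neg]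
    have h4 : ‖p - p'‖ ≤ 0 := by linarith
    exact sub_eq_zero.1 (norm_le_zero_iff.1 h4)
  have hsurj : Function.Surjective fun p => p + F p := by
    intro z
    have hT : ContractingWith (1 / 2) fun q => z - F (P z + (q - P q)) := by
      refine ⟨by rw [← NNReal.coe_lt_coe]; norm_num, LipschitzWith.of_dist_le_mul fun q q' => ?_⟩
      rw [dist_eq_norm, dist_eq_norm]
      have h1 := hlip (P z + (q - P q)) (P z + (q' - P q')) (by rw [hPQ, hPQ])
      have h2 : P z + (q - P q) - (P z + (q' - P q')) = (q - q') - P (q - q') := by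
        rw [map_sub]; abel
      rw [h2] at h1
      have h3 := hQ (q - q')
      have h4 : z - F (P z + (q - P q)) - (z - F (P z + (q' - P q')))
        = -(F (P z + (q - P q)) - F (P z + (q' - P q'))) := by abel
      rw [h4, norm_neg]
      push_cast
      linarith
    let p := ContractingWith.fixedPoint _ hT
    have hp : z - F (P z + (p - P p)) = p := hT.fixedPoint_isFixedPt
    have hPp : P p = P z := by
      have := congrArg P hp
      rw [map_sub, hPF, sub_zero] at this
      exact this.symm
    refine ⟨p, ?_⟩
    have h5 : P z + (p - P p) = p := by rw [hPp]; abel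
    rw [h5] at hp
    show p + F p = z
    exact (sub_eq_iff_eq_add.1 hp).symm
  let e : E ≃ E := Equiv.ofBijective _ ⟨hinj, hsurj⟩
  have he : ∀ p, e p = p + F p := fun p => rfl
  have hinv : Continuous e.symm := by
    rw [continuous_iff_continuousAt]
    intro z
    set p := e.symm z with hp
    have hzp : z = p + F p := by rw [← he, hp, e.apply_symm_apply]
    have key : ∀ z', ‖e.symm z' - p‖ ≤ 2 * (‖z' - z‖ + ‖F p - F (P z' + (p - P p))‖) := by
      intro z'
      set p' := e.symm z' with hp'
      have hzp' : z' = p' + F p' := by rw [← he, hp', e.apply_symm_apply]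
      have hPp' : P p' = P z' := by rw [hzp', map_add, hPF, add_zero]
      have h1 := hlip (P z' + (p - P p)) p' (by rw [hPQ, hPp'])
      have h2 : P z' + (p - P p) - p' = (p - p') - P (p - p') := by
        rw [map_sub, hPp']; abel
      rw [h2] at h1
      have h3 := hQ (p - p')
      have h4 : p' - p = (z' - z) + (F p - F (P z' + (p - P p))) +
          (F (P z' + (p - P p)) - F p') := by
        have e1 : p' = z' - F p' := eq_sub_of_add_eq hzp'.symm
        have e2 : p = z - F p := eq_sub_of_add_eq hzp.symm
        calc p' - p = (z' - F p') - (z - F p) := by rw [← e1, ← e2]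
          _ = _ := by abel
      have h5 : ‖p' - p‖ ≤ ‖z' - z‖ + ‖F p - F (P z' + (p - P p))‖ +
          ‖F (P z' + (p - P p)) - F p'‖ := by
        rw [h4]
        exact norm_add₃_le
      have h6 : ‖p' - p‖ = ‖p - p'‖ := norm_sub_rev _ _
      linarith
    rw [ContinuousAt, tendsto_iff_norm_sub_tendsto_zero]
    refine squeeze_zero (fun _ => norm_nonneg _) key ?_
    have hc : Continuous fun z' => 2 * (‖z' - z‖ + ‖F p - F (P z' + (p - P p))‖) := by fun_prop
    have h0 : 2 * (‖z - z‖ + ‖F p - F (P z + (p - P p))‖) = 0 := by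
      have : P z + (p - P p) = p := by
        rw [hzp, map_add, hPF]; abel
      rw [this]; simp
    rw [← h0]
    exact hc.tendsto z
  exact ⟨⟨e, continuous_id.add hF, hinv⟩, he⟩

/-! ### Coordinate projections of `ℓ₂` -/

theorem l2_norm_mono {ι : Type*} {x y : l2Space ι}
    (h : ∀ i, |(y : ι → ℝ) i| ≤ |(x : ι → ℝ) i|) : ‖y‖ ≤ ‖x‖ := by
  refine lp.norm_le_of_forall_sum_le (by simp) (norm_nonneg _) fun s => ?_
  refine le_trans (Finset.sum_le_sum fun i _ => ?_) (lp.sum_rpow_le_norm_rpow (by simp) x s)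
  exact Real.rpow_le_rpow (norm_nonneg _) (h i) (by simp)

theorem l2_memℓp_indicator {ι : Type*} (J : Set ι) (x : l2Space ι) :
    Memℓp (J.indicator (x : ι → ℝ)) 2 := by
  have hx := lp.memℓp x
  have h2 : 0 < (2 : ENNReal).toReal := by simp
  rw [memℓp_gen_iff h2] at hx ⊢
  refine Summable.of_nonneg_of_le (fun i => by positivity) (fun i => ?_) hx
  refine Real.rpow_le_rpow (norm_nonneg _) ?_ h2.le
  exact norm_indicator_le_norm_self _ _

/-- The coordinate projection of `ℓ₂(ι)` that keeps the coordinates in `J` and sets the others to `0`. -/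
def coordProj {ι : Type*} (J : Set ι) : l2Space ι →L[ℝ] l2Space ι :=
  LinearMap.mkContinuous
    { toFun := fun x => ⟨J.indicator (x : ι → ℝ), l2_memℓp_indicator J x⟩
      map_add' := fun x y => by
        ext i
        exact congrFun (Set.indicator_add J (x : ι → ℝ) (y : ι → ℝ)) i
      map_smul' := fun c x => by
        ext i
        exact congrFun (Set.indicator_const_smul J c (x : ι → ℝ)) i } 1 fun x => by
    rw [one_mul]
    exact l2_norm_mono fun i => norm_indicator_le_norm_self (s := J) (x : ι → ℝ) i

theorem coordProj_apply {ι : Type*} (J : Set ι) (x : l2Space ι) (i : ι) :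
    (coordProj J x : ι → ℝ) i = J.indicator (x : ι → ℝ) i := rfl

theorem coordProj_apply_mem {ι : Type*} {J : Set ι} (x : l2Space ι) {i : ι} (hi : i ∈ J) :
    (coordProj J x : ι → ℝ) i = (x : ι → ℝ) i := by
  rw [coordProj_apply, indicator_of_mem hi]

theorem coordProj_apply_notMem {ι : Type*} {J : Set ι} (x : l2Space ι) {i : ι} (hi : i ∉ J) :
    (coordProj J x : ι → ℝ) i = 0 := by
  rw [coordProj_apply, indicator_of_notMem hi]

theorem coordProj_coordProj {ι : Type*} (J J' : Set ι) (x : l2Space ι) :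
    coordProj J (coordProj J' x) = coordProj (J ∩ J') x := by
  ext i
  show J.indicator (J'.indicator (x : ι → ℝ)) i = (J ∩ J').indicator (x : ι → ℝ) i
  rw [indicator_indicator]

theorem coordProj_idem {ι : Type*} (J : Set ι) (x : l2Space ι) :
    coordProj J (coordProj J x) = coordProj J x := by
  rw [coordProj_coordProj, inter_self]

theorem coordProj_compl {ι : Type*} (J : Set ι) (x : l2Space ι) :
    coordProj Jᶜ x = x - coordProj J x := by
  ext i
  show Jᶜ.indicator (x : ι → ℝ) i = (x : ι → ℝ) i - J.indicator (x : ι → ℝ) i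
  rw [indicator_compl]
  rfl

theorem coordProj_mono {ι : Type*} {J J' : Set ι} (h : J ⊆ J') (x : l2Space ι) :
    ‖coordProj J x‖ ≤ ‖coordProj J' x‖ := by
  refine l2_norm_mono fun i => ?_
  by_cases hi : i ∈ J
  · rw [coordProj_apply_mem x hi, coordProj_apply_mem x (h hi)]
  · rw [coordProj_apply_notMem x hi, abs_zero]
    exact abs_nonneg _

theorem coordProj_norm_le {ι : Type*} (J : Set ι) (x : l2Space ι) : ‖coordProj J x‖ ≤ ‖x‖ :=
  l2_norm_mono fun i => norm_indicator_le_norm_self (s := J) (x : ι → ℝ) i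

theorem l2_abs_apply_le {ι : Type*} (x : l2Space ι) (i : ι) : |(x : ι → ℝ) i| ≤ ‖x‖ :=
  lp.norm_apply_le_norm (by simp) x i

theorem coordProj_zero_of_disjoint {ι : Type*} {J J' : Set ι} (h : Disjoint J J') (x : l2Space ι) :
    coordProj J (coordProj J' x) = 0 := by
  rw [coordProj_coordProj, h.inter_eq]
  ext i
  rw [coordProj_apply_notMem x (notMem_empty i)]
  rfl

theorem l2_exists_finset_tail_lt {ι : Type*} (x : l2Space ι) {ε : ℝ} (hε : 0 < ε) :
    ∃ S : Finset ι, ‖coordProj (S : Set ι)ᶜ x‖ < ε := by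
  classical
  have h := lp.hasSum_single (p := 2) (by simp) x
  obtain ⟨S, hS⟩ := (Metric.tendsto_atTop.1 h) ε hε
  refine ⟨S, ?_⟩
  have h1 := hS S le_rfl
  rw [dist_eq_norm, norm_sub_rev] at h1
  refine lt_of_le_of_lt (l2_norm_mono fun i => ?_) h1
  by_cases hi : i ∈ S
  · rw [coordProj_apply_notMem x (by simpa using hi), abs_zero]
    exact abs_nonneg _
  · rw [coordProj_apply_mem x (by simpa using hi), lp.coeFn_sub, lp.coeFn_sum, Pi.sub_apply,
      Finset.sum_apply]
    rw [Finset.sum_eq_zero, sub_zero]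
    intro j hj
    exact lp.single_apply_ne _ _ _ (fun h => hi (h ▸ hj))

/-- The elements of a compact subset of `ℓ₂` have uniformly small tails. -/
theorem IsCompact.exists_finset_tail_le {ι : Type*} {K : Set (l2Space ι)} (hK : IsCompact K)
    {ε : ℝ} (hε : 0 < ε) : ∃ S : Finset ι, ∀ x ∈ K, ‖coordProj (S : Set ι)ᶜ x‖ ≤ ε := by
  classical
  obtain ⟨t, -, htf, ht⟩ := hK.finite_cover_balls (half_pos hε)
  choose S hS using fun x : l2Space ι => l2_exists_finset_tail_lt x (half_pos hε)
  refine ⟨htf.toFinset.biUnion S, fun x hx => ?_⟩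
  obtain ⟨y, hy, hxy⟩ := mem_iUnion₂.1 (ht hx)
  have h1 : ‖coordProj ((htf.toFinset.biUnion S : Finset ι) : Set ι)ᶜ x‖
      ≤ ‖coordProj (S y : Set ι)ᶜ x‖ := by
    refine coordProj_mono (compl_subset_compl.2 ?_) x
    exact_mod_cast Finset.subset_biUnion_of_mem S (htf.mem_toFinset.2 hy)
  have h2 : coordProj (S y : Set ι)ᶜ x = coordProj (S y : Set ι)ᶜ (x - y) +
      coordProj (S y : Set ι)ᶜ y := by rw [← map_add, sub_add_cancel]
  have h3 := norm_add_le (coordProj (S y : Set ι)ᶜ (x - y)) (coordProj (S y : Set ι)ᶜ y)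
  have h4 := coordProj_norm_le (S y : Set ι)ᶜ (x - y)
  have h5 := hS y
  have h6 : ‖x - y‖ < ε / 2 := by simpa [dist_eq_norm] using hxy
  rw [h2] at h1
  linarith

theorem exists_injective_avoiding {ι : Type*} [Infinite ι] (T : ℕ → Finset ι) :
    ∃ w : ℕ → ι, Function.Injective w ∧ ∀ k, w k ∉ T k := by
  let f := Infinite.natEmbedding ι
  obtain ⟨φ, hφ, h⟩ := Filter.extraction_forall_of_eventually
    (P := fun n k => f k ∉ T n) (fun n => by
      have : (f ⁻¹' (T n : Set ι)).Finite := (T n).finite_toSet.preimage f.injective.injOn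
      rw [← Nat.cofinite_eq_atTop]
      exact this.compl_mem_cofinite)
  exact ⟨f ∘ φ, f.injective.comp hφ.injective, h⟩

/-- Countably many functions with values in `[-1, 1]` are recorded in distinct coordinates `w n`, with
summable weights `η n`. -/
theorem exists_tag_map {ι V : Type*} [TopologicalSpace V] (w : ℕ → ι) (hw : Function.Injective w)
    (η : ℕ → ℝ) (hη0 : ∀ n, 0 ≤ η n) (hη : Summable η) (u : ℕ → V → ℝ)
    (hu : ∀ n, Continuous (u n)) (hu1 : ∀ n x, |u n x| ≤ 1) :
    ∃ Φ : V → l2Space ι, Continuous Φ ∧ (∀ x, ‖Φ x‖ ≤ ∑' n, η n) ∧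
      (∀ x n, (Φ x : ι → ℝ) (w n) = η n * u n x) ∧
      (∀ x i, i ∉ range w → (Φ x : ι → ℝ) i = 0) := by
  classical
  let e : ℕ → l2Space ι := fun n => lp.single 2 (w n) 1
  have he : ∀ n, ‖e n‖ = 1 := fun n => by
    simp [e, lp.norm_single]
  let Φ : V → l2Space ι := fun x => ∑' n, (η n * u n x) • e n
  have hbd : ∀ n x, ‖(η n * u n x) • e n‖ ≤ η n := by
    intro n x
    rw [norm_smul, he, mul_one, Real.norm_eq_abs, abs_mul, abs_of_nonneg (hη0 n)]
    exact mul_le_of_le_one_right (hη0 n) (hu1 n x)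
  have hsum : ∀ x, Summable fun n => (η n * u n x) • e n := fun x =>
    Summable.of_norm_bounded hη (fun n => hbd n x)
  have hcoord : ∀ x i, (Φ x : ι → ℝ) i = ∑' n, (η n * u n x) * (e n : ι → ℝ) i := by
    intro x i
    have := (lp.evalCLM ℝ (fun _ : ι => ℝ) 2 i).map_tsum (hsum x)
    exact this
  refine ⟨Φ, ?_, ?_, ?_, ?_⟩
  · refine continuous_tsum (fun n => ?_) hη hbd
    exact ((continuous_const.mul (hu n)).smul continuous_const)
  · exact fun x => tsum_of_norm_bounded hη.hasSum (fun n => hbd n x)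
  · intro x n
    rw [hcoord, tsum_eq_single n]
    · simp only [e]; rw [lp.single_apply_self, mul_one]
    · intro m hm
      simp only [e]
      rw [lp.single_apply_ne _ _ _ (fun h => hm (hw h).symm), mul_zero]
  · intro x i hi
    rw [hcoord]
    have : ∀ n, η n * u n x * (e n : ι → ℝ) i = 0 := fun n => by
      simp only [e]
      rw [lp.single_apply_ne _ _ _ (fun h => hi ⟨n, h.symm⟩), mul_zero]
    simp [this]

/-- The functions are built from the distances to countably many points whose closure contains `K`. -/
theorem IsCompact.exists_separating_seq {V : Type*} [MetricSpace V] {K : Set V}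
    (hK : IsCompact K) :
    ∃ u : ℕ → V → ℝ, (∀ n, Continuous (u n)) ∧ (∀ n x, 0 ≤ u n x ∧ u n x ≤ 1) ∧
      ∀ x ∈ K, ∀ y ∈ K, x ≠ y → ∃ n, u n x = 0 ∧ u n y = 1 := by
  rcases K.eq_empty_or_nonempty with rfl | hne
  · exact ⟨fun _ _ => 0, fun _ => continuous_const, by simp, by simp⟩
  obtain ⟨c, hc, hKc⟩ := hK.isSeparable
  have hcne : c.Nonempty := by
    rw [← closure_nonempty_iff]
    exact hne.mono hKc
  obtain ⟨m, rfl⟩ := hc.exists_eq_range hcne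
  let v : ℕ × ℕ → V → ℝ := fun p x => max 0 (min 1 ((p.2 : ℝ) * dist x (m p.1) - 1))
  refine ⟨fun n => v n.unpair, fun n => ?_, fun n x => ⟨le_max_left _ _, ?_⟩, ?_⟩
  · simp only [v]; fun_prop
  · exact max_le zero_le_one (min_le_left _ _)
  · intro x hx y hy hxy
    have hd : 0 < dist x y := dist_pos.2 hxy
    obtain ⟨r, hr⟩ := exists_nat_gt (3 / dist x y)
    have hr0 : (0 : ℝ) < r := lt_trans (by positivity) hr
    rw [div_lt_iff₀ hd] at hr
    obtain ⟨_, ⟨k, rfl⟩, hk⟩ := Metric.mem_closure_iff.1 (hKc hx) (1 / r) (by positivity)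
    rw [lt_div_iff₀ hr0] at hk
    refine ⟨Nat.pair k r, ?_, ?_⟩
    · simp only [Nat.unpair_pair, v]
      apply max_eq_left
      apply (min_le_right _ _).trans
      linarith
    · simp only [Nat.unpair_pair, v]
      have h3 := dist_triangle_right x y (m k)
      have h4 : (r : ℝ) * dist x y ≤ r * (dist x (m k) + dist y (m k)) :=
        mul_le_mul_of_nonneg_left h3 hr0.le
      rw [min_eq_left, max_eq_right zero_le_one]
      linarith

/-! ### Deficiency of compacta and cutoff functions -/

theorem coordProj_add_compl {ι : Type*} (J : Set ι) (x : l2Space ι) :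
    coordProj J x + coordProj Jᶜ x = x := by
  rw [coordProj_compl]; abel

theorem coordProj_eq_zero_of {ι : Type*} {J : Set ι} {x : l2Space ι}
    (h : ∀ i ∈ J, (x : ι → ℝ) i = 0) : coordProj J x = 0 := by
  ext i
  by_cases hi : i ∈ J
  · rw [coordProj_apply_mem x hi, h i hi]; rfl
  · rw [coordProj_apply_notMem x hi]; rfl

/-- The case of `exists_shear_homeomorph` in which `P` keeps the coordinates in `J`. -/
theorem exists_coord_shear {ι : Type*} (J : Set ι) (F : l2Space ι → l2Space ι)
    (hF : Continuous F) (hJF : ∀ p, coordProj J (F p) = 0)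
    (hlip : ∀ p q, coordProj J p = coordProj J q → ‖F p - F q‖ ≤ 1 / 2 * ‖p - q‖) :
    ∃ S : l2Space ι ≃ₜ l2Space ι, ∀ p, S p = p + F p := by
  refine exists_shear_homeomorph (coordProj J) (coordProj_idem J) (fun x => ?_) F hF hJF hlip
  rw [← coordProj_compl]
  exact coordProj_norm_le _ _

/-- A compact set is made to vanish on infinitely many coordinates by a homeomorphism close to the identity.
It is a composition of two shears: the first records the `J`-part of a point in the coordinates
`w (2 * k + 1)` outside `J`, where the entries of points of `L` are too small to disturb the record;
on the image of `L` the `J`-part is then a function of the other coordinates, and the second shear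
subtracts it. -/
theorem exists_deficient_homeomorph {ι : Type*} [Infinite ι] {L : Set (l2Space ι)}
    (hL : IsCompact L) {ε : ℝ} (hε : 0 < ε) :
    ∃ J : Set ι, J.Infinite ∧ ∃ μ : l2Space ι ≃ₜ l2Space ι,
      (∀ x, ‖μ x - x‖ ≤ ε) ∧ ∀ x ∈ L, coordProj J (μ x) = 0 := by
  classical
  obtain ⟨S, hS⟩ := hL.exists_finset_tail_le (half_pos hε)
  let η : ℕ → ℝ := fun k => ε / 2 / 2 / 2 ^ k
  have hη0 : ∀ k, 0 < η k := fun k => by positivity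
  have hηs : Summable η := summable_geometric_two' _
  have hηt : ∑' k, η k = ε / 2 := tsum_geometric_two' _
  -- At the coordinate `w (2 * k + 1)` the tag has weight `η k`, while entries of points of `L` are at most `η k / 4`.
  choose T hT using fun k => hL.exists_finset_tail_le (show 0 < η k / 4 by have := hη0 k; positivity)
  obtain ⟨w, hwi, hw⟩ := exists_injective_avoiding (fun k => S ∪ T (k / 2))
  have hinj2 : Function.Injective fun k => w (2 * k) := fun a b h => by
    have := hwi h; omega
  have hinj1 : Function.Injective fun k => w (2 * k + 1) := fun a b h => by
    have := hwi h; omega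
  let J : Set ι := range fun k => w (2 * k)
  have hwJ : ∀ k, w (2 * k + 1) ∉ J := by
    rintro k ⟨m, hm⟩
    have := hwi hm
    omega
  have hJS : J ⊆ (S : Set ι)ᶜ := by
    rintro _ ⟨k, rfl⟩ h
    exact hw (2 * k) (Finset.mem_union_left _ h)
  have hQL : ∀ x ∈ L, ‖coordProj J x‖ ≤ ε / 2 := fun x hx =>
    (coordProj_mono hJS x).trans (hS x hx)
  have hnoise : ∀ x ∈ L, ∀ k, |(x : ι → ℝ) (w (2 * k + 1))| ≤ η k / 4 := by
    intro x hx k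
    have hk : w (2 * k + 1) ∈ (T k : Set ι)ᶜ := by
      intro h
      have h2 := hw (2 * k + 1)
      rw [show (2 * k + 1) / 2 = k by omega] at h2
      exact h2 (Finset.mem_union_right _ h)
    rw [← coordProj_apply_mem x hk]
    exact (l2_abs_apply_le _ _).trans (hT k x hx)
  obtain ⟨u, huc, hu1, husep⟩ := (hL.image (coordProj J).continuous).exists_separating_seq
  obtain ⟨Φ, hΦc, hΦn, hΦw, hΦ0⟩ := exists_tag_map (fun k => w (2 * k + 1)) hinj1 η
    (fun k => (hη0 k).le) hηs u huc
    (fun n x => abs_le.2 ⟨by linarith [(hu1 n x).1], (hu1 n x).2⟩)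
  have hQΦ : ∀ x, coordProj J (Φ x) = 0 := fun x => coordProj_eq_zero_of fun i hi =>
    hΦ0 x i (by rintro ⟨k, rfl⟩; exact hwJ k hi)
  have hPΦ : ∀ x, coordProj Jᶜ (Φ x) = Φ x := fun x => by
    rw [coordProj_compl, hQΦ, sub_zero]
  obtain ⟨Sa, hSa⟩ := exists_coord_shear J (fun p => Φ (coordProj J p)) (by fun_prop)
    (fun p => hQΦ _) (fun p q h => by rw [h]; simp)
  obtain ⟨f, hfc, hfL, hfn⟩ := exists_factor_extension hL
    (φ := fun l => coordProj Jᶜ l + Φ (coordProj J l)) (ψ := fun l => coordProj J l)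
    (by fun_prop) (by fun_prop) (fun x hx y hy hxy => by
      by_contra hne
      obtain ⟨n, hn0, hn1⟩ := husep _ (mem_image_of_mem _ hx) _ (mem_image_of_mem _ hy) hne
      have h1 := congrArg (fun z : l2Space ι => (z : ι → ℝ) (w (2 * n + 1))) hxy
      simp only [lp.coeFn_add, Pi.add_apply] at h1
      rw [coordProj_apply_mem x (show w (2 * n + 1) ∈ Jᶜ from hwJ n),
        coordProj_apply_mem y (show w (2 * n + 1) ∈ Jᶜ from hwJ n), hΦw, hΦw, hn0, hn1] at h1
      have h2 := abs_le.1 (hnoise x hx n)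
      have h3 := abs_le.1 (hnoise y hy n)
      have h4 := hη0 n
      linarith [h2.1, h2.2, h3.1, h3.2]) (ε / 2) (by positivity) hQL
  obtain ⟨Sb, hSb⟩ := exists_coord_shear Jᶜ (fun p => -coordProj J (f (coordProj Jᶜ p)))
    (by fun_prop)
    (fun p => by rw [map_neg, coordProj_zero_of_disjoint disjoint_compl_left, neg_zero])
    (fun p q h => by rw [h]; simp)
  refine ⟨J, infinite_range_of_injective hinj2, Sa.trans Sb, fun x => ?_, fun x hx => ?_⟩
  · rw [Homeomorph.trans_apply, hSb, hSa]
    have h1 := hΦn (coordProj J x)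
    rw [hηt] at h1
    have h2 := (coordProj_norm_le J (f (coordProj Jᶜ (x + Φ (coordProj J x))))).trans (hfn _)
    have h3 := norm_sub_le (Φ (coordProj J x)) (coordProj J (f (coordProj Jᶜ (x + Φ (coordProj J x)))))
    rw [show x + Φ (coordProj J x) + -coordProj J (f (coordProj Jᶜ (x + Φ (coordProj J x)))) - x =
      Φ (coordProj J x) - coordProj J (f (coordProj Jᶜ (x + Φ (coordProj J x)))) by abel]
    linarith
  · rw [Homeomorph.trans_apply, hSb, hSa, map_add (coordProj Jᶜ), hPΦ, hfL x hx, coordProj_idem, map_add,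
      map_add, hQΦ, map_neg, coordProj_idem]
    abel

theorem exists_zero_set_function {V : Type*} [MetricSpace V] {D : Set V} (hD : IsClosed D) :
    ∃ ρ : V → ℝ, Continuous ρ ∧ (∀ x, 0 ≤ ρ x ∧ ρ x ≤ 1) ∧ ∀ x, ρ x = 0 ↔ x ∈ D := by
  rcases D.eq_empty_or_nonempty with rfl | hne
  · exact ⟨fun _ => 1, continuous_const, by simp, by simp⟩
  · refine ⟨fun x => min 1 (Metric.infDist x D), by
      have := Metric.continuous_infDist_pt D
      fun_prop, fun x => ⟨le_min zero_le_one Metric.infDist_nonneg, min_le_left _ _⟩, fun x => ?_⟩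
    rw [hD.mem_iff_infDist_zero hne]
    show min 1 (Metric.infDist x D) = 0 ↔ _
    constructor
    · intro h
      rcases min_choice 1 (Metric.infDist x D) with h1 | h1
      · rw [h1] at h; norm_num at h
      · rwa [h1] at h
    · intro h
      rw [h]; simp

/-- A cutoff function equal to `1` within distance `ε` of `A` and to `0` at distance at least `2 * ε` from `A`. -/
def cutoff {V : Type*} [PseudoMetricSpace V] (A : Set V) (ε : ℝ) (p : V) : ℝ :=
  max 0 (min 1 (2 - Metric.infDist p A / ε))

theorem cutoff_continuous {V : Type*} [PseudoMetricSpace V] (A : Set V) (ε : ℝ) :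
    Continuous (cutoff A ε) := by
  have := Metric.continuous_infDist_pt A
  unfold cutoff
  fun_prop

theorem cutoff_mem {V : Type*} [PseudoMetricSpace V] (A : Set V) (ε : ℝ) (p : V) :
    0 ≤ cutoff A ε p ∧ cutoff A ε p ≤ 1 :=
  ⟨le_max_left _ _, max_le zero_le_one (min_le_left _ _)⟩

theorem cutoff_eq_one {V : Type*} [PseudoMetricSpace V] {A : Set V} {ε : ℝ} (hε : 0 < ε) {p a : V}
    (ha : a ∈ A) (h : dist p a ≤ ε) : cutoff A ε p = 1 := by
  have h1 : Metric.infDist p A / ε ≤ 1 := by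
    rw [div_le_one hε]
    exact (Metric.infDist_le_dist_of_mem ha).trans h
  unfold cutoff
  rw [min_eq_left (by linarith), max_eq_right zero_le_one]

theorem cutoff_eq_zero {V : Type*} [PseudoMetricSpace V] {A : Set V} {ε : ℝ} (hε : 0 < ε) {p : V}
    (h : 2 * ε ≤ Metric.infDist p A) : cutoff A ε p = 0 := by
  have h1 : 2 ≤ Metric.infDist p A / ε := by
    rwa [le_div_iff₀ hε]
  unfold cutoff
  apply max_eq_left
  exact (min_le_right _ _).trans (by linarith)

theorem cutoff_lip {V : Type*} [PseudoMetricSpace V] {A : Set V} {ε : ℝ} (hε : 0 < ε) (p q : V) :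
    |cutoff A ε p - cutoff A ε q| ≤ dist p q / ε := by
  have h0 : |Metric.infDist p A - Metric.infDist q A| ≤ dist p q := by
    have := (Metric.lipschitz_infDist_pt A).dist_le_mul p q
    simpa [Real.dist_eq] using this
  have h1 : |Metric.infDist p A / ε - Metric.infDist q A / ε| ≤ dist p q / ε := by
    rw [← sub_div, abs_div, abs_of_pos hε]
    gcongr
  refine le_trans ?_ h1
  unfold cutoff
  refine (abs_max_sub_max_le_max _ _ _ _).trans ?_
  rw [sub_self, abs_zero, max_eq_right (abs_nonneg _)]
  refine (abs_min_sub_min_le_max _ _ _ _).trans ?_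
  rw [sub_self, abs_zero, max_eq_right (abs_nonneg _), sub_sub_sub_cancel_left, abs_sub_comm]

/-! ### Unknotting of compacta -/

/-- A shear adding a function of the `J`-part to the complementary coordinates, localized near `A`. The cutoff
is `1/ε`-Lipschitz and the function is bounded by `ε/2`, so the product is `1/2`-Lipschitz along the fibres. -/
theorem exists_cutoff_shear {ι : Type*} (J : Set ι) (A : Set (l2Space ι)) {ε : ℝ} (hε : 0 < ε)
    (G : l2Space ι → l2Space ι) (hG : Continuous G) (hGn : ∀ p, ‖G p‖ ≤ ε / 2) :
    ∃ S : l2Space ι ≃ₜ l2Space ι,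
      (∀ p, S p = p + cutoff A ε p • coordProj Jᶜ (G (coordProj J p))) ∧
      (∀ p, ‖S p - p‖ ≤ ε / 2) := by
  have hn : ∀ p, ‖coordProj Jᶜ (G (coordProj J p))‖ ≤ ε / 2 := fun p =>
    (coordProj_norm_le _ _).trans (hGn _)
  have hc := cutoff_continuous A ε
  obtain ⟨S, hS⟩ := exists_coord_shear J
    (fun p => cutoff A ε p • coordProj Jᶜ (G (coordProj J p))) (by fun_prop)
    (fun p => by
      rw [map_smul, coordProj_zero_of_disjoint disjoint_compl_right, smul_zero])
    (fun p q h => by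
      rw [h, ← sub_smul, norm_smul, Real.norm_eq_abs]
      have h1 := cutoff_lip (A := A) hε p q
      have h2 := hn q
      calc |cutoff A ε p - cutoff A ε q| * ‖coordProj Jᶜ (G (coordProj J q))‖
          ≤ (dist p q / ε) * (ε / 2) := by gcongr
        _ = 1 / 2 * ‖p - q‖ := by rw [dist_eq_norm]; field_simp)
  refine ⟨S, hS, fun p => ?_⟩
  rw [hS, add_sub_cancel_left, norm_smul, Real.norm_eq_abs, abs_of_nonneg (cutoff_mem A ε p).1]
  have h1 := (cutoff_mem A ε p).2
  have h2 := hn p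
  have h3 := norm_nonneg (coordProj Jᶜ (G (coordProj J p)))
  nlinarith [(cutoff_mem A ε p).1]

/-- Klee's trick, for compacta `K` and `h(K)` that vanish on an infinite set `J` of coordinates: `h` is the
composition `x ↦ x + j x ↦ h x + j x ↦ h x` of three localized shears, where `j` takes values in the
`J`-coordinates, vanishes on `D` and is injective on `K` off `D`. -/
theorem unknot_deficient {ι : Type*} {J : Set ι} (hJ : J.Infinite) {K D A : Set (l2Space ι)}
    (hK : IsCompact K) (hD : IsClosed D) (hKDA : K \ D ⊆ A)
    {h : l2Space ι → l2Space ι} (hc : ContinuousOn h K) (hi : InjOn h K) (hDid : ∀ x ∈ D, h x = x)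
    (hJK : ∀ x ∈ K, coordProj J x = 0) (hJh : ∀ x ∈ K, coordProj J (h x) = 0)
    {ε : ℝ} (hε : 0 < ε) (hnear : ∀ x ∈ K, ‖h x - x‖ ≤ ε / 2) :
    ∃ θ : l2Space ι ≃ₜ l2Space ι, (∀ x ∈ K, θ x = h x) ∧
      (∀ p, 2 * ε ≤ Metric.infDist p A → θ p = p) ∧ ∀ p, ‖θ p - p‖ ≤ 3 * ε / 2 := by
  obtain ⟨u, huc, hu1, husep⟩ := hK.exists_separating_seq
  obtain ⟨ρ, hρc, hρ1, hρD⟩ := exists_zero_set_function hD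
  let η : ℕ → ℝ := fun k => ε / 2 / 2 / 2 ^ k
  have hη0 : ∀ k, 0 < η k := fun k => by positivity
  have hηs : Summable η := summable_geometric_two' _
  have hηt : ∑' k, η k = ε / 2 := tsum_geometric_two' _
  let w := hJ.natEmbedding
  -- The tags are `ρ, ρ u₀, ρ u₁, …`: they vanish on `D`, and off `D` they determine every `u m x`.
  let v : ℕ → l2Space ι → ℝ := fun n => Nat.casesOn n ρ (fun m x => ρ x * u m x)
  have hv0 : ∀ x, v 0 x = ρ x := fun x => rfl
  have hvs : ∀ n x, v (n + 1) x = ρ x * u n x := fun n x => rfl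
  obtain ⟨j, hjc, hjn, hjw, hj0⟩ := exists_tag_map (fun k => (w k : ι))
    (Subtype.val_injective.comp w.injective) η
    (fun k => (hη0 k).le) hηs v
    (fun n => by
      cases n with
      | zero => exact hρc
      | succ m => exact hρc.mul (huc m))
    (fun n x => by
      cases n with
      | zero => rw [hv0]; exact abs_le.2 ⟨by linarith [(hρ1 x).1], (hρ1 x).2⟩
      | succ m =>
        rw [hvs, abs_mul, abs_of_nonneg (hρ1 x).1, abs_of_nonneg (hu1 m x).1]
        exact mul_le_one₀ (hρ1 x).2 (hu1 m x).1 (hu1 m x).2)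
  rw [hηt] at hjn
  have hjP : ∀ x, coordProj Jᶜ (j x) = 0 := fun x => coordProj_eq_zero_of fun i hi =>
    hj0 x i (by rintro ⟨k, rfl⟩; exact hi (w k).2)
  have hjQ : ∀ x, coordProj J (j x) = j x := fun x => by
    have := coordProj_add_compl J (j x)
    rwa [hjP, add_zero] at this
  have hjρ : ∀ x y, j x = j y → ρ x = ρ y := fun x y hxy => by
    have := congrArg (fun z : l2Space ι => (z : ι → ℝ) (w 0)) hxy
    simp only [hjw, hv0] at this
    exact mul_left_cancel₀ (hη0 0).ne' this
  have hjD : ∀ x ∈ D, j x = 0 := fun x hx => by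
    have hρ0 := (hρD x).2 hx
    ext i
    by_cases hi : i ∈ range fun k => (w k : ι)
    · obtain ⟨k, rfl⟩ := hi
      rw [hjw]
      cases k with
      | zero => simp [hv0, hρ0]
      | succ m => simp [hvs, hρ0]
    · rw [hj0 x i hi]; rfl
  have hjinj : ∀ x ∈ K, ∀ y ∈ K, j x = j y → x ∉ D → x = y := fun x hx y hy hxy hxD => by
    by_contra hne
    obtain ⟨n, hn0, hn1⟩ := husep x hx y hy hne
    have h1 := congrArg (fun z : l2Space ι => (z : ι → ℝ) (w (n + 1))) hxy
    simp only [hjw, hvs, hn0, hn1] at h1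
    rw [← hjρ x y hxy] at h1
    have h2 : ρ x ≠ 0 := fun h => hxD ((hρD x).1 h)
    have h3 := mul_left_cancel₀ (hη0 (n + 1)).ne' h1
    rw [mul_zero, mul_one] at h3
    exact h2 h3.symm
  obtain ⟨g, hgc, hgK, hgn⟩ := exists_factor_extension hK (φ := j) (ψ := fun x => h x - x)
    hjc.continuousOn (by fun_prop) (fun x hx y hy hxy => by
      by_cases hxD : x ∈ D
      · have hyD : y ∈ D := by
          rw [← hρD, ← hjρ x y hxy, hρD]; exact hxD
        rw [hDid x hxD, hDid y hyD, sub_self, sub_self]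
      · rw [hjinj x hx y hy hxy hxD]) (ε / 2) (by positivity) hnear
  obtain ⟨j', hjc', hjK', hjn'⟩ := exists_factor_extension hK (φ := h) (ψ := fun x => -j x)
    hc (by fun_prop) (fun x hx y hy hxy => by rw [hi hx hy hxy]) (ε / 2) (by positivity)
    (fun x _ => by rw [norm_neg]; exact hjn x)
  -- The three shears perform `x ↦ x + j x`, `x + j x ↦ h x + j x` and `h x + j x ↦ h x` on `K`.
  obtain ⟨S1, hS1, hn1⟩ := exists_cutoff_shear Jᶜ A hε j hjc hjn
  obtain ⟨S2, hS2, hn2⟩ := exists_cutoff_shear J A hε g hgc hgn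
  obtain ⟨S3, hS3, hn3⟩ := exists_cutoff_shear Jᶜ A hε j' hjc' hjn'
  rw [compl_compl] at hS1 hS3
  refine ⟨(S1.trans S2).trans S3, fun x hx => ?_, fun p hp => ?_, fun p => ?_⟩
  · have hPx : coordProj Jᶜ x = x := by rw [coordProj_compl, hJK x hx, sub_zero]
    have hPh : coordProj Jᶜ (h x) = h x := by rw [coordProj_compl, hJh x hx, sub_zero]
    rw [Homeomorph.trans_apply, Homeomorph.trans_apply]
    have hg' : coordProj Jᶜ (g (j x)) = h x - x := by rw [hgK x hx, map_sub, hPx, hPh]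
    have hj' : coordProj J (j' (h x)) = -j x := by rw [hjK' x hx, map_neg, hjQ]
    by_cases hxD : x ∈ D
    · have e1 : S1 x = x := by rw [hS1, hPx, hjQ, hjD x hxD, smul_zero, add_zero]
      have e2 : S2 x = x := by
        rw [hS2, hJK x hx, ← hjD x hxD, hg', hDid x hxD, sub_self, smul_zero, add_zero]
      have e3 : S3 x = x := by
        rw [hS3, hPx]
        have : coordProj J (j' x) = 0 := by
          have := hj'
          rwa [hDid x hxD, hjD x hxD, neg_zero] at this
        rw [this, smul_zero, add_zero]
      rw [e1, e2, e3, hDid x hxD]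
    · have hxA : x ∈ A := hKDA ⟨hx, hxD⟩
      have e1 : S1 x = x + j x := by
        rw [hS1, hPx, hjQ, cutoff_eq_one hε hxA (by simpa using hε.le), one_smul]
      have e2 : S2 (x + j x) = h x + j x := by
        rw [hS2, map_add, hJK x hx, hjQ, zero_add, hg', cutoff_eq_one hε hxA, one_smul]
        · abel
        · rw [dist_eq_norm, add_sub_cancel_left]
          linarith [hjn x]
      have e3 : S3 (h x + j x) = h x := by
        rw [hS3, map_add, hjP, hPh, add_zero, hj', cutoff_eq_one hε hxA, one_smul]
        · abel
        · rw [dist_eq_norm, show h x + j x - x = (h x - x) + j x by abel]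
          have := norm_add_le (h x - x) (j x)
          linarith [hjn x, hnear x hx]
      rw [e1, e2, e3]
  · have h0 := cutoff_eq_zero hε hp
    have e1 : S1 p = p := by rw [hS1, h0, zero_smul, add_zero]
    have e2 : S2 p = p := by rw [hS2, h0, zero_smul, add_zero]
    have e3 : S3 p = p := by rw [hS3, h0, zero_smul, add_zero]
    rw [Homeomorph.trans_apply, Homeomorph.trans_apply, e1, e2, e3]
  · rw [Homeomorph.trans_apply, Homeomorph.trans_apply]
    have := norm_add₃_le (a := S3 (S2 (S1 p)) - S2 (S1 p)) (b := S2 (S1 p) - S1 p) (c := S1 p - p)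
    rw [sub_add_sub_cancel, sub_add_sub_cancel] at this
    linarith [hn1 p, hn2 (S1 p), hn3 (S2 (S1 p))]

/-- Unknotting of compacta: an embedding `h` of a compact set `K`, close to the identity and equal to it on `D`,
extends to a small homeomorphism of `ℓ₂` supported in the `ε`-neighbourhood of `A`. It is obtained from
`unknot_deficient` by conjugation with a homeomorphism making `K ∪ h(K)` deficient. -/
theorem unknot_compact {ι : Type*} [Infinite ι] {K D A : Set (l2Space ι)}
    (hK : IsCompact K) (hD : IsCompact D) (hKDA : K \ D ⊆ A)
    {h : l2Space ι → l2Space ι} (hc : ContinuousOn h K) (hi : InjOn h K) (hDid : ∀ x ∈ D, h x = x)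
    (hA : A.Nonempty)
    {ε : ℝ} (hε : 0 < ε) (hnear : ∀ x ∈ K, ‖h x - x‖ ≤ ε / 10) :
    ∃ θ : l2Space ι ≃ₜ l2Space ι, (∀ x ∈ K, θ x = h x) ∧
      (∀ p, ε ≤ Metric.infDist p A → θ p = p) ∧ ∀ p, ‖θ p - p‖ < ε := by
  obtain ⟨J, hJ, μ, hμn, hμL⟩ := exists_deficient_homeomorph
    (hK.union (hK.image_of_continuousOn hc)) (show 0 < ε / 40 by positivity)
  have hμn' : ∀ x, ‖μ.symm x - x‖ ≤ ε / 40 := fun x => by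
    have := hμn (μ.symm x)
    rwa [μ.apply_symm_apply, norm_sub_rev] at this
  obtain ⟨θ, hθK, hθA, hθn⟩ := unknot_deficient hJ (K := μ '' K) (D := μ '' D) (A := μ '' A)
    (h := fun x => μ (h (μ.symm x))) (hK.image μ.continuous) (hD.image μ.continuous).isClosed
    (by
      rintro _ ⟨⟨x, hx, rfl⟩, hxD⟩
      exact mem_image_of_mem _ (hKDA ⟨hx, fun h => hxD (mem_image_of_mem _ h)⟩))
    (by
      refine μ.continuous.comp_continuousOn (hc.comp μ.symm.continuous.continuousOn ?_)
      rintro _ ⟨x, hx, rfl⟩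
      simpa using hx)
    (by
      rintro _ ⟨x, hx, rfl⟩ _ ⟨y, hy, rfl⟩ hxy
      simp only [μ.symm_apply_apply] at hxy
      rw [hi hx hy (μ.injective hxy)])
    (by
      rintro _ ⟨x, hx, rfl⟩
      simp only [μ.symm_apply_apply]
      rw [hDid x hx])
    (by
      rintro _ ⟨x, hx, rfl⟩
      exact hμL x (Or.inl hx))
    (by
      rintro _ ⟨x, hx, rfl⟩
      simp only [μ.symm_apply_apply]
      exact hμL _ (Or.inr (mem_image_of_mem _ hx)))
    (ε := 3 * ε / 10) (by positivity)
    (by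
      rintro _ ⟨x, hx, rfl⟩
      simp only [μ.symm_apply_apply]
      have := norm_add₃_le (a := μ (h x) - h x) (b := h x - x) (c := x - μ x)
      rw [sub_add_sub_cancel, sub_add_sub_cancel] at this
      have h2 := hμn x
      rw [norm_sub_rev] at h2
      linarith [hμn (h x), hnear x hx])
  refine ⟨(μ.trans θ).trans μ.symm, fun x hx => ?_, fun p hp => ?_, fun p => ?_⟩
  · simp only [Homeomorph.trans_apply]
    rw [hθK _ (mem_image_of_mem _ hx), μ.symm_apply_apply, μ.symm_apply_apply]
  · simp only [Homeomorph.trans_apply]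
    rw [hθA, μ.symm_apply_apply]
    rw [Metric.le_infDist (hA.image _)]
    rintro _ ⟨a, ha, rfl⟩
    have h1 : ε ≤ dist p a := hp.trans (Metric.infDist_le_dist_of_mem ha)
    have h2 := dist_triangle4 p (μ p) (μ a) a
    have h3 := hμn p
    have h4 := hμn a
    rw [← dist_eq_norm] at h3 h4
    rw [dist_comm] at h3
    linarith
  · simp only [Homeomorph.trans_apply]
    have := norm_add₃_le (a := μ.symm (θ (μ p)) - θ (μ p)) (b := θ (μ p) - μ p) (c := μ p - p)
    rw [sub_add_sub_cancel, sub_add_sub_cancel] at this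
    linarith [hμn p, hθn (μ p), hμn' (θ (μ p))]

/-! ### Covering dimension and Euclidean embeddings -/

/-- General position: the vectors `f i` can be perturbed so that any `m` of them are linearly independent,
each new vector being chosen off the finitely many proper subspaces spanned by the previous ones. -/
theorem exists_general_position {I : Type*} {m : ℕ} (f : I → Fin m → ℝ) {ε : ℝ} (hε : 0 < ε)
    (T : Finset I) :
    ∃ v : I → Fin m → ℝ, (∀ i ∈ T, dist (v i) (f i) < ε) ∧
      ∀ S ⊆ T, S.card ≤ m → LinearIndepOn ℝ v (S : Set I) := by
  classical
  induction T using Finset.induction_on with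
  | empty =>
    refine ⟨f, by simp, fun S hS _ => ?_⟩
    rw [Finset.subset_empty.1 hS, Finset.coe_empty]
    exact linearIndepOn_empty _ _
  | insert a T ha ih =>
    obtain ⟨v, hv, hvi⟩ := ih
    let bad : Set (Fin m → ℝ) :=
      ⋃ S ∈ T.powerset.filter (fun S => S.card < m), (Submodule.span ℝ (v '' (S : Set I)) : Set _)
    have hbad : MeasureTheory.volume bad = 0 := by
      refine (MeasureTheory.measure_biUnion_null_iff (Finset.countable_toSet _)).2 fun S hS => ?_
      have hS' : S.card < m := by simpa using (Finset.mem_filter.1 (Finset.mem_coe.1 hS)).2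
      refine MeasureTheory.Measure.addHaar_submodule _ _ fun htop => ?_
      have h1 := finrank_span_finset_le_card (R := ℝ) (S.image v)
      rw [Finset.coe_image] at h1
      rw [Set.finrank, htop, finrank_top, Module.finrank_fin_fun] at h1
      exact absurd (h1.trans Finset.card_image_le) (by omega)
    obtain ⟨p, hp, hpb⟩ : (Metric.ball (f a) ε \ bad).Nonempty := by
      by_contra hne
      have hsub : Metric.ball (f a) ε ⊆ bad := by
        rw [Set.not_nonempty_iff_eq_empty, sdiff_eq_empty] at hne; exact hne
      have h2 := MeasureTheory.measure_mono_null hsub hbad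
      exact (Metric.measure_ball_pos MeasureTheory.volume (f a) hε).ne' h2
    have hupd : ∀ S : Finset I, a ∉ S → EqOn (Function.update v a p) v (S : Set I) := by
      intro S hS i hi
      exact Function.update_of_ne (by rintro rfl; exact hS hi) _ _
    refine ⟨Function.update v a p, ?_, ?_⟩
    · intro i hi
      by_cases hia : i = a
      · subst hia; simpa using hp
      · rw [Function.update_of_ne hia]
        exact hv i ((Finset.mem_insert.1 hi).resolve_left hia)
    · intro S hS hSc
      by_cases haS : a ∈ S
      · have hST : S.erase a ⊆ T := by
          intro i hi
          exact (Finset.mem_insert.1 (hS (Finset.mem_of_mem_erase hi))).resolve_left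
            (Finset.ne_of_mem_erase hi)
        have hcard := Finset.card_erase_lt_of_mem haS
        have ha' : a ∉ S.erase a := Finset.notMem_erase a S
        rw [← Finset.insert_erase haS, Finset.coe_insert, linearIndepOn_insert (by simp)]
        refine ⟨(linearIndepOn_congr (hupd _ ha')).2 (hvi _ hST (by omega)), ?_⟩
        rw [Function.update_self, (hupd _ ha').image_eq]
        intro hmem
        refine hpb (mem_biUnion (x := S.erase a) ?_ hmem)
        simp only [Finset.coe_filter, Finset.mem_powerset, mem_ofPred_eq]
        exact ⟨hST, by omega⟩
      · refine (linearIndepOn_congr (hupd _ haS)).2 (hvi _ ?_ hSc)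
        intro i hi
        exact (Finset.mem_insert.1 (hS hi)).resolve_left (by rintro rfl; exact haS hi)

/-- Maps whose fibres have diameter less than `ε` form an open set. -/
theorem isOpen_sep {K W : Type*} [MetricSpace K] [CompactSpace K] [MetricSpace W] (ε : ℝ) :
    IsOpen {f : C(K, W) | ∀ x y, f x = f y → dist x y < ε} := by
  rw [← isClosed_compl_iff]
  have hcl : IsClosed {q : C(K, W) × (K × K) | q.1 q.2.1 = q.1 q.2.2 ∧ ε ≤ dist q.2.1 q.2.2} := by
    refine IsClosed.and (isClosed_eq ?_ ?_) (isClosed_le continuous_const ?_) <;> fun_prop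
  convert isClosedMap_fst_of_compactSpace _ hcl using 1
  ext f
  simp only [mem_compl_iff, mem_ofPred_eq, not_forall, not_lt, mem_image, Prod.exists,
    exists_and_right, exists_eq_right]
  constructor
  · rintro ⟨x, y, hxy, hd⟩; exact ⟨x, y, hxy, hd⟩
  · rintro ⟨x, y, hxy, hd⟩; exact ⟨x, y, hxy, hd⟩

/-- Maps with small fibres are dense: `f` is replaced by the barycentric map of a fine cover of order `n + 1`
to vectors in general position. Two points with the same image have barycentric coordinates supported on at
most `2 * n + 2` linearly independent vectors, hence equal, so they lie in a common member of the cover. -/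
theorem dense_sep {K : Type*} [MetricSpace K] [CompactSpace K] {n : ℕ} (hn : CovDimLE K n)
    {ε : ℝ} (hε : 0 < ε) :
    Dense {f : C(K, Fin (2 * n + 2) → ℝ) | ∀ x y, f x = f y → dist x y < ε} := by
  classical
  rw [Metric.dense_iff]
  intro f δ hδ
  obtain ⟨η, hη, hfη⟩ := Metric.uniformContinuous_iff.1
    (CompactSpace.uniformContinuous_of_continuous f.continuous) (δ / 4) (by positivity)
  set r := min η ε / 2 with hr
  have hr0 : 0 < r := by positivity
  obtain ⟨𝒱, ⟨h𝒱o, h𝒱c⟩, h𝒱r, h𝒱m⟩ := hn (range fun x : K => Metric.ball x r)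
    ⟨by rintro _ ⟨x, rfl⟩; exact Metric.isOpen_ball, by
      refine eq_univ_of_forall fun x => ?_
      exact ⟨_, mem_range_self x, Metric.mem_ball_self hr0⟩⟩
  have hdiam : ∀ V ∈ 𝒱, ∀ x ∈ V, ∀ y ∈ V, dist x y < min η ε := by
    intro V hV x hx y hy
    obtain ⟨_, ⟨z, rfl⟩, hz⟩ := h𝒱r V hV
    have h1 := Metric.mem_ball.1 (hz hx)
    have h2 := Metric.mem_ball.1 (hz hy)
    have := dist_triangle_right x y z
    linarith
  obtain ⟨t, ht⟩ := isCompact_univ.elim_finite_subcover (fun V : 𝒱 => (V : Set K))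
    (fun V => h𝒱o _ V.2) (by rw [← sUnion_eq_iUnion, h𝒱c])
  obtain ⟨lam, hlam⟩ := PartitionOfUnity.exists_isSubordinate isClosed_univ
    (fun V : t => ((V : 𝒱) : Set K)) (fun V => h𝒱o _ V.1.2) (by
      intro x hx
      obtain ⟨V, hV, hxV⟩ := mem_iUnion₂.1 (ht hx)
      exact mem_iUnion.2 ⟨⟨V, hV⟩, hxV⟩)
  have hmemV : ∀ (V : t) x, lam V x ≠ 0 → x ∈ ((V : 𝒱) : Set K) := fun V x h =>
    hlam V (subset_tsupport _ h)
  have hsum : ∀ x, ∑ V, lam V x = 1 := fun x => by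
    have := lam.sum_eq_one (mem_univ x)
    rwa [finsum_eq_sum_of_fintype] at this
  have hq : ∀ V : t, ∃ q : Fin (2 * n + 2) → ℝ, ∀ x ∈ ((V : 𝒱) : Set K), dist q (f x) < δ / 4 := by
    intro V
    by_cases h : ((V : 𝒱) : Set K).Nonempty
    · obtain ⟨p, hp⟩ := h
      exact ⟨f p, fun x hx => hfη ((hdiam _ V.1.2 p hp x hx).trans_le (min_le_left _ _))⟩
    · exact ⟨0, fun x hx => absurd ⟨x, hx⟩ h⟩
  choose q hq using hq
  obtain ⟨v, hv, hvi⟩ := exists_general_position q (show 0 < δ / 4 by positivity) Finset.univ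
  let g : C(K, Fin (2 * n + 2) → ℝ) := ⟨fun x => ∑ V, lam V x • v V, by fun_prop⟩
  refine ⟨g, ?_, ?_⟩
  · rw [Metric.mem_ball]
    refine ((ContinuousMap.dist_le (show 0 ≤ δ / 2 by positivity)).2 fun x => ?_).trans_lt
      (by linarith)
    have e : g x - f x = ∑ V, lam V x • (v V - f x) := by
      simp only [smul_sub, Finset.sum_sub_distrib, ← Finset.sum_smul, hsum, one_smul]
      rfl
    rw [dist_eq_norm, e]
    calc ‖∑ V, lam V x • (v V - f x)‖ ≤ ∑ V, ‖lam V x • (v V - f x)‖ := norm_sum_le _ _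
      _ ≤ ∑ V, lam V x * (δ / 2) := by
        refine Finset.sum_le_sum fun V _ => ?_
        rw [norm_smul, Real.norm_of_nonneg (lam.nonneg V x)]
        by_cases h0 : lam V x = 0
        · simp [h0]
        · refine mul_le_mul_of_nonneg_left ?_ (lam.nonneg V x)
          rw [← dist_eq_norm]
          have h1 := hv V (Finset.mem_univ _)
          have h2 := hq V x (hmemV V x h0)
          linarith [dist_triangle (v V) (q V) (f x)]
      _ = δ / 2 := by rw [← Finset.sum_mul, hsum, one_mul]
  · intro x y hxy
    let S : K → Finset t := fun x => Finset.univ.filter fun V => lam V x ≠ 0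
    have hS : ∀ x, (S x).card ≤ n + 1 := by
      intro x
      obtain ⟨hfin, hle⟩ := h𝒱m x
      refine le_trans ?_ hle
      rw [← Set.ncard_coe_finset]
      refine Set.ncard_le_ncard_of_injOn (fun V : t => ((V : 𝒱) : Set K)) ?_ ?_ hfin
      · intro V hV
        have : lam V x ≠ 0 := by simpa [S] using hV
        exact ⟨V.1.2, hmemV V x this⟩
      · intro V _ V' _ h
        exact Subtype.ext (Subtype.ext h)
    have hli := hvi (S x ∪ S y) (Finset.subset_univ _)
      ((Finset.card_union_le _ _).trans (by linarith [hS x, hS y]))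
    rw [linearIndepOn_finset_iff] at hli
    have hzero : ∑ V ∈ S x ∪ S y, (lam V x - lam V y) • v V = 0 := by
      rw [Finset.sum_subset (Finset.subset_univ _)]
      · simp only [sub_smul, Finset.sum_sub_distrib]
        exact sub_eq_zero.2 hxy
      · intro V _ hV
        have h1 : lam V x = 0 := by
          by_contra h; exact hV (Finset.mem_union_left _ (by simpa [S] using h))
        have h2 : lam V y = 0 := by
          by_contra h; exact hV (Finset.mem_union_right _ (by simpa [S] using h))
        rw [h1, h2, sub_zero, zero_smul]
    have hall := hli _ hzero
    obtain ⟨V, hV⟩ : ∃ V, lam V x ≠ 0 := by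
      by_contra h
      push Not at h
      have := hsum x
      simp [h] at this
    have h1 := hall V (Finset.mem_union_left _ (by simpa [S] using hV))
    have hVy : lam V y ≠ 0 := by rw [← sub_eq_zero.1 h1]; exact hV
    exact (hdiam _ V.1.2 x (hmemV V x hV) y (hmemV V y hVy)).trans_le (min_le_right _ _)

/-- The Menger–Nöbeling embedding theorem, by the Baire category theorem. The target has one dimension more than
the optimal `2 * n + 1` because linear rather than affine independence is used. -/
theorem exists_injective_of_covDimLE {K : Type*} [MetricSpace K] [CompactSpace K] {n : ℕ}
    (hn : CovDimLE K n) : ∃ f : C(K, Fin (2 * n + 2) → ℝ), Function.Injective f := by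
  have hd := dense_iInter_of_isOpen_nat
    (f := fun k : ℕ => {f : C(K, Fin (2 * n + 2) → ℝ) | ∀ x y, f x = f y → dist x y < 1 / (k + 1)})
    (fun k => isOpen_sep _) (fun k => dense_sep hn (by positivity))
  obtain ⟨f, hf⟩ := hd.nonempty
  refine ⟨f, fun x y hxy => ?_⟩
  by_contra hne
  obtain ⟨k, hk⟩ := exists_nat_one_div_lt (dist_pos.2 hne)
  exact lt_asymm hk (mem_iInter.1 hf k x y hxy)

/-- A compact subset of `ℝ^m` is finite-dimensional. The bound is crude: in a grid of overlapping cubes each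
point lies in at most `2 ^ m` cubes. -/
theorem covDimLE_of_injective {K : Type*} [MetricSpace K] [CompactSpace K] {m : ℕ}
    {φ : K → Fin m → ℝ} (hφ : Continuous φ) (hi : Function.Injective φ) : CovDimLE K (2 ^ m) := by
  classical
  intro 𝒰 h𝒰
  have hemb : IsClosedEmbedding φ := hφ.isClosedEmbedding hi
  have hU : ∀ U : 𝒰, ∃ O : Set (Fin m → ℝ), IsOpen O ∧ φ ⁻¹' O = U := fun U =>
    hemb.isInducing.isOpen_iff.1 (h𝒰.1 _ U.2)
  choose O hO hOU using hU
  obtain ⟨δ, hδ, hL⟩ := lebesgue_number_lemma_of_metric (isCompact_range hφ) hO (by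
    rintro _ ⟨x, rfl⟩
    have hx : x ∈ ⋃₀ 𝒰 := by rw [h𝒰.2]; trivial
    obtain ⟨U, hU, hxU⟩ := hx
    refine mem_iUnion.2 ⟨⟨U, hU⟩, ?_⟩
    change x ∈ φ ⁻¹' _
    rw [hOU]; exact hxU)
  -- Preimages of the open cubes of side `δ` centred at the points of the lattice `(δ/2) ℤ^m`.
  let V : (Fin m → ℤ) → Set K := fun z => {y | ∀ i, |φ y i / (δ / 2) - z i| < 1}
  have hVo : ∀ z, IsOpen (V z) := by
    intro z
    simp only [V, ofPred_forall]
    refine isOpen_iInter_of_finite fun i => isOpen_lt ?_ continuous_const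
    have := (continuous_apply i).comp hφ
    simp only [Function.comp_def] at this
    fun_prop
  refine ⟨{W | ∃ z, (V z).Nonempty ∧ W = V z}, ⟨?_, ?_⟩, ?_, ?_⟩
  · rintro _ ⟨z, -, rfl⟩; exact hVo z
  · refine eq_univ_of_forall fun x => ?_
    have hx : x ∈ V (fun i => ⌊φ x i / (δ / 2)⌋) := by
      intro i
      rw [Int.self_sub_floor, abs_of_nonneg (Int.fract_nonneg _)]
      exact Int.fract_lt_one _
    exact ⟨_, ⟨_, ⟨x, hx⟩, rfl⟩, hx⟩
  · rintro _ ⟨z, ⟨p, hp⟩, rfl⟩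
    obtain ⟨U, hU⟩ := hL _ (mem_range_self p)
    refine ⟨U, U.2, fun y hy => ?_⟩
    rw [← hOU]
    refine hU ?_
    rw [Metric.mem_ball, dist_pi_lt_iff hδ]
    intro i
    have h1 := abs_lt.1 (hy i)
    have h2 := abs_lt.1 (hp i)
    have e1 : φ y i = (φ y i / (δ / 2)) * (δ / 2) := by field_simp
    have e2 : φ p i = (φ p i / (δ / 2)) * (δ / 2) := by field_simp
    rw [Real.dist_eq, e1, e2, ← sub_mul, abs_mul, abs_of_pos (half_pos hδ)]
    have : |φ y i / (δ / 2) - φ p i / (δ / 2)| < 2 := by rw [abs_lt]; constructor <;> linarith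
    nlinarith
  · intro x
    let T : Finset (Fin m → ℤ) := Fintype.piFinset fun i =>
      Finset.Icc ⌊φ x i / (δ / 2)⌋ (⌊φ x i / (δ / 2)⌋ + 1)
    have hsub : {W ∈ {W | ∃ z, (V z).Nonempty ∧ W = V z} | x ∈ W} ⊆ ((T.image V : Finset _) : Set (Set K)) := by
      rintro _ ⟨⟨z, -, rfl⟩, hx⟩
      refine Finset.mem_coe.2 (Finset.mem_image_of_mem _ (Fintype.mem_piFinset.2 fun i => ?_))
      have h1 := abs_lt.1 (hx i)
      rw [Finset.mem_Icc]
      constructor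
      · have : (⌊φ x i / (δ / 2)⌋ : ℝ) < z i + 1 :=
          (Int.floor_le _).trans_lt (by linarith [h1.2])
        exact Int.lt_add_one_iff.1 (by exact_mod_cast this)
      · have h3 := Int.lt_floor_add_one (φ x i / (δ / 2))
        have : (z i : ℝ) < ⌊φ x i / (δ / 2)⌋ + 1 + 1 := by linarith [h1.1]
        exact Int.lt_add_one_iff.1 (by exact_mod_cast this)
    refine ⟨(Finset.finite_toSet _).subset hsub, ?_⟩
    refine (Set.ncard_le_ncard hsub (Finset.finite_toSet _)).trans ?_
    rw [Set.ncard_coe_finset]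
    refine Finset.card_image_le.trans ?_
    have : T.card = 2 ^ m := by
      rw [Fintype.card_piFinset, Finset.prod_congr rfl (g := fun _ => 2)]
      · simp
      · intro i _
        rw [Int.card_Icc]
        omega
    omega

theorem IsOpenCover.comap {A X : Type*} [TopologicalSpace A] [TopologicalSpace X] {f : A → X}
    (hf : Continuous f) {𝒱 : Set (Set X)} (h : IsOpenCover 𝒱) : IsOpenCover ((f ⁻¹' ·) '' 𝒱) := by
  refine ⟨?_, eq_univ_of_forall fun x => ?_⟩
  · rintro _ ⟨V, hV, rfl⟩; exact (h.1 V hV).preimage hf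
  · have hx : f x ∈ ⋃₀ 𝒱 := by rw [h.2]; trivial
    obtain ⟨U, hU, hxU⟩ := hx
    exact ⟨_, mem_image_of_mem _ hU, hxU⟩

theorem CovDimLE.of_isClosedEmbedding {A X : Type*} [TopologicalSpace A] [TopologicalSpace X]
    {f : A → X} (hf : IsClosedEmbedding f) {n : ℕ} (h : CovDimLE X n) : CovDimLE A n := by
  intro 𝒰 h𝒰
  have hcov : ∀ a, ∃ U ∈ 𝒰, a ∈ U := fun a => by
    have : a ∈ ⋃₀ 𝒰 := by rw [h𝒰.2]; trivial
    exact this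
  obtain ⟨𝒱, h𝒱, h𝒱r, h𝒱m⟩ := h ({O | IsOpen O ∧ ∃ U ∈ 𝒰, f ⁻¹' O ⊆ U} ∪ {(range f)ᶜ})
    ⟨by
      rintro O (hO | rfl)
      · exact hO.1
      · exact hf.isClosed_range.isOpen_compl, by
      refine eq_univ_of_forall fun x => ?_
      by_cases hx : x ∈ range f
      · obtain ⟨a, rfl⟩ := hx
        obtain ⟨U, hU, haU⟩ := hcov a
        obtain ⟨O, hO, hOU⟩ := hf.isInducing.isOpen_iff.1 (h𝒰.1 U hU)
        refine ⟨O, Or.inl ⟨hO, U, hU, hOU.subset⟩, ?_⟩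
        change a ∈ f ⁻¹' O
        rwa [hOU]
      · exact ⟨_, Or.inr rfl, hx⟩⟩
  have h𝒱' := h𝒱.comap hf.continuous
  refine ⟨{W ∈ (f ⁻¹' ·) '' 𝒱 | W.Nonempty}, ⟨fun W hW => h𝒱'.1 W hW.1,
    eq_univ_of_forall fun a => ?_⟩, ?_, fun a => ?_⟩
  · have : a ∈ ⋃₀ ((f ⁻¹' ·) '' 𝒱) := by rw [h𝒱'.2]; trivial
    obtain ⟨W, hW, haW⟩ := this
    exact ⟨W, ⟨hW, ⟨a, haW⟩⟩, haW⟩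
  · rintro _ ⟨⟨V, hV, rfl⟩, ⟨a, ha⟩⟩
    · obtain ⟨O, hO | rfl, hVO⟩ := h𝒱r V hV
      · obtain ⟨-, U, hU, hOU⟩ := hO
        exact ⟨U, hU, (preimage_mono hVO).trans hOU⟩
      · exact absurd (mem_range_self a) (hVO ha)
  · have e : {V ∈ {W ∈ (f ⁻¹' ·) '' 𝒱 | W.Nonempty} | a ∈ V} ⊆ (f ⁻¹' ·) '' {V ∈ 𝒱 | f a ∈ V} := by
      rintro _ ⟨⟨⟨V, hV, rfl⟩, -⟩, ha⟩
      exact ⟨V, ⟨hV, ha⟩, rfl⟩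
    have hfin := (h𝒱m (f a)).1
    exact ⟨(hfin.image _).subset e, (Set.ncard_le_ncard e (hfin.image _)).trans
      ((Set.ncard_image_le hfin).trans (h𝒱m (f a)).2)⟩

theorem CovDimLE.of_clopen_partition {X A : Type*} [TopologicalSpace X] {P : A → Set X}
    (hP : ∀ a, IsOpen (P a)) (hd : ∀ a b x, x ∈ P a → x ∈ P b → a = b) (hc : ∀ x, ∃ a, x ∈ P a)
    {n : ℕ} (h : ∀ a, CovDimLE ↥(P a) n) : CovDimLE X n := by
  intro 𝒰 h𝒰
  have := fun a => h a _ (h𝒰.comap (continuous_subtype_val (p := (· ∈ P a))))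
  choose 𝒱 h𝒱 h𝒱r h𝒱m using this
  refine ⟨{W | ∃ a, ∃ V ∈ 𝒱 a, W = Subtype.val '' V}, ⟨?_, ?_⟩, ?_, ?_⟩
  · rintro _ ⟨a, V, hV, rfl⟩
    exact (hP a).isOpenMap_subtype_val _ ((h𝒱 a).1 V hV)
  · refine eq_univ_of_forall fun x => ?_
    obtain ⟨a, ha⟩ := hc x
    have : (⟨x, ha⟩ : P a) ∈ ⋃₀ 𝒱 a := by rw [(h𝒱 a).2]; trivial
    obtain ⟨V, hV, hx⟩ := this
    exact ⟨_, ⟨a, V, hV, rfl⟩, ⟨_, hx, rfl⟩⟩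
  · rintro _ ⟨a, V, hV, rfl⟩
    obtain ⟨_, ⟨U, hU, rfl⟩, hVU⟩ := h𝒱r a V hV
    exact ⟨U, hU, image_subset_iff.2 hVU⟩
  · intro x
    obtain ⟨a, ha⟩ := hc x
    have e : {W ∈ {W | ∃ a, ∃ V ∈ 𝒱 a, W = Subtype.val '' V} | x ∈ W} ⊆
        (Subtype.val '' ·) '' {V ∈ 𝒱 a | (⟨x, ha⟩ : P a) ∈ V} := by
      rintro _ ⟨⟨b, V, hV, rfl⟩, ⟨⟨y, hy⟩, hyV, rfl⟩⟩
      obtain rfl := hd _ _ _ ha hy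
      exact ⟨V, ⟨hV, hyV⟩, rfl⟩
    have hfin := (h𝒱m a ⟨x, ha⟩).1
    exact ⟨(hfin.image _).subset e, (Set.ncard_le_ncard e (hfin.image _)).trans
      ((Set.ncard_image_le hfin).trans (h𝒱m a ⟨x, ha⟩).2)⟩

/-- A finite-dimensional compactum in a metric space, expressed as a compact set that embeds into some `ℝ^m`;
by `FDC.topFinDim` and `FDC.of_topFinDim` this is equivalent to finite covering dimension. The embedding is
a total function of which only the restriction to `K` matters. -/
def FDC {V : Type*} [MetricSpace V] (K : Set V) : Prop :=
  IsCompact K ∧ ∃ (m : ℕ) (φ : V → Fin m → ℝ), ContinuousOn φ K ∧ InjOn φ K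

section FDC
variable {V : Type*} [MetricSpace V] {K L : Set V}

theorem FDC.of_fintype {J : Type*} [Finite J] (hK : IsCompact K) {φ : V → J → ℝ}
    (hc : ContinuousOn φ K) (hi : InjOn φ K) : FDC K := by
  obtain ⟨m, ⟨e⟩⟩ := Finite.exists_equiv_fin J
  refine ⟨hK, m, fun x j => φ x (e.symm j), ?_, ?_⟩
  · rw [continuousOn_pi] at hc ⊢
    exact fun j => hc _
  · intro x hx y hy h
    refine hi hx hy (funext fun j => ?_)
    have := congrFun h (e j)
    simpa using this

theorem FDC.mono (h : FDC K) (hL : IsCompact L) (hLK : L ⊆ K) : FDC L :=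
  ⟨hL, h.2.imp fun _ ⟨φ, hφ⟩ => ⟨φ, hφ.1.mono hLK, hφ.2.mono hLK⟩⟩

theorem FDC.empty : FDC (∅ : Set V) := ⟨isCompact_empty, 0, fun _ => 0, by simp, by simp⟩

theorem FDC.exists_extension (h : FDC K) : ∃ (m : ℕ) (φ : V → Fin m → ℝ), Continuous φ ∧ InjOn φ K := by
  obtain ⟨hK, m, φ, hc, hi⟩ := h
  obtain ⟨r, hr⟩ := (hK.image_of_continuousOn hc).isBounded.exists_norm_le
  obtain ⟨G, hG, hGe, -⟩ := exists_factor_extension hK continuousOn_id hc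
    (by rintro x - y - h; exact congrArg φ h) (max r 0) (le_max_right _ _)
    (fun x hx => (hr _ (mem_image_of_mem _ hx)).trans (le_max_left _ _))
  refine ⟨m, G, hG, fun x hx y hy h => hi hx hy ?_⟩
  have h1 := hGe x hx
  have h2 := hGe y hy
  simp only [id] at h1 h2
  rw [← h1, ← h2, h]

theorem FDC.union (hK : FDC K) (hL : FDC L) : FDC (K ∪ L) := by
  obtain ⟨m, φ, hφ, hφi⟩ := hK.exists_extension
  obtain ⟨n, ψ, hψ, hψi⟩ := hL.exists_extension
  obtain ⟨ρ, hρ, -, hρ0⟩ := exists_zero_set_function hK.1.isClosed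
  obtain ⟨σ, hσ, -, hσ0⟩ := exists_zero_set_function hL.1.isClosed
  refine FDC.of_fintype (J := (Fin m ⊕ Fin n) ⊕ (Unit ⊕ Unit)) (hK.1.union hL.1)
    (φ := fun x => Sum.elim (Sum.elim (φ x) (ψ x)) (Sum.elim (fun _ => ρ x) (fun _ => σ x)))
    (Continuous.continuousOn ?_) ?_
  · refine continuous_pi ?_
    rw [continuous_pi_iff] at hφ hψ
    rintro ((i | i) | (i | i))
    exacts [hφ i, hψ i, hρ, hσ]
  · intro x hx y hy h
    have h1 : ρ x = ρ y := congrFun h (Sum.inr (Sum.inl ()))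
    have h2 : σ x = σ y := congrFun h (Sum.inr (Sum.inr ()))
    rcases hx with hx | hx
    · exact hφi hx ((hρ0 y).1 (h1 ▸ (hρ0 x).2 hx))
        (funext fun i => congrFun h (Sum.inl (Sum.inl i)))
    · exact hψi hx ((hσ0 y).1 (h2 ▸ (hσ0 x).2 hx))
        (funext fun i => congrFun h (Sum.inl (Sum.inr i)))

theorem FDC.image {W : Type*} [MetricSpace W] (hK : FDC K) {h : V → W} (hc : ContinuousOn h K)
    (hi : InjOn h K) : FDC (h '' K) := by
  obtain ⟨hK, m, φ, hφ, hφi⟩ := hK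
  obtain ⟨r, hr⟩ := (hK.image_of_continuousOn hφ).isBounded.exists_norm_le
  obtain ⟨G, hG, hGe, -⟩ := exists_factor_extension hK hc hφ
    (fun x hx y hy h => congrArg φ (hi hx hy h)) (max r 0) (le_max_right _ _)
    (fun x hx => (hr _ (mem_image_of_mem _ hx)).trans (le_max_left _ _))
  refine ⟨hK.image_of_continuousOn hc, m, G, hG.continuousOn, ?_⟩
  rintro _ ⟨x, hx, rfl⟩ _ ⟨y, hy, rfl⟩ h
  rw [hGe x hx, hGe y hy] at h
  rw [hφi hx hy h]

theorem FDC.topFinDim (hK : FDC K) : TopFinDim ↥K := by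
  obtain ⟨hK, m, φ, hφ, hφi⟩ := hK
  have := isCompact_iff_compactSpace.1 hK
  exact ⟨2 ^ m, covDimLE_of_injective (continuousOn_iff_continuous_domRestrict.1 hφ)
    (injOn_iff_injective.1 hφi)⟩

theorem FDC.of_topFinDim (hK : IsCompact K) (h : TopFinDim ↥K) : FDC K := by
  have := isCompact_iff_compactSpace.1 hK
  obtain ⟨n, hn⟩ := h
  obtain ⟨f, hf⟩ := exists_injective_of_covDimLE hn
  have e : K.domRestrict (Function.extend Subtype.val f 0) = f :=
    funext fun x => Subtype.val_injective.extend_apply _ _ _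
  refine ⟨hK, _, Function.extend Subtype.val f 0, ?_, ?_⟩
  · rw [continuousOn_iff_continuous_domRestrict, e]
    exact f.continuous
  · rw [injOn_iff_injective, e]
    exact hf

end FDC

/-! ### `ℓ₂ᶠ` is a countable union of finite-dimensional locally compact sets -/

theorem continuous_l2_apply {ι : Type*} (i : ι) : Continuous fun x : l2Space ι => (x : ι → ℝ) i := by
  refine LipschitzWith.continuous (K := 1) (LipschitzWith.of_dist_le_mul fun x y => ?_)
  rw [NNReal.coe_one, one_mul, dist_eq_norm, dist_eq_norm]
  exact l2_abs_apply_le (x - y) i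

theorem isCompact_l2_box {ι : Type*} (s : Finset ι) (k : ℕ) :
    IsCompact {x : l2Space ι | (∀ i ∈ s, (1 : ℝ) / (k + 1) ≤ |(x : ι → ℝ) i| ∧
      |(x : ι → ℝ) i| ≤ k + 1) ∧ ∀ i ∉ s, (x : ι → ℝ) i = 0} := by
  classical
  let Λ : (s → ℝ) → l2Space ι := fun c => ∑ i : s, c i • lp.single 2 (i : ι) (1 : ℝ)
  have hΛ : Continuous Λ := by fun_prop
  have hbox : IsCompact (Set.pi univ fun _ : s => Metric.closedBall (0 : ℝ) (k + 1)) :=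
    isCompact_univ_pi fun _ => isCompact_closedBall _ _
  refine (hbox.image hΛ).of_isClosed_subset ?_ ?_
  · have h1 := fun i : ι => continuous_l2_apply i
    refine IsClosed.and ?_ ?_
    · simp only [ofPred_forall]
      refine isClosed_biInter fun i _ => IsClosed.and ?_ ?_
      · exact isClosed_le continuous_const (h1 i).abs
      · exact isClosed_le (h1 i).abs continuous_const
    · simp only [ofPred_forall]
      exact isClosed_biInter fun i _ => isClosed_eq (h1 i) continuous_const
  · rintro x ⟨hx, hx0⟩
    refine ⟨fun i => (x : ι → ℝ) i, ?_, ?_⟩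
    · intro i _
      rw [mem_closedBall_zero_iff]
      exact (hx i i.2).2
    · ext j
      simp only [Λ]
      rw [Finset.sum_coe_sort s (fun i => (x : ι → ℝ) i • lp.single 2 (i : ι) (1 : ℝ))]
      rw [lp.coeFn_sum, Finset.sum_apply]
      simp only [lp.coeFn_smul, Pi.smul_apply, lp.single_apply, smul_eq_mul]
      by_cases hj : j ∈ s
      · rw [Finset.sum_eq_single j]
        · simp
        · intro b _ hb; simp [hb.symm]
        · exact fun h => absurd hj h
      · rw [hx0 j hj]
        refine Finset.sum_eq_zero fun b hb => ?_
        have : j ≠ b := by rintro rfl; exact hj hb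
        simp [this]

/-- The pieces consist of the vectors with exactly `n` nonzero coordinates, all of modulus between `1/(k+1)`
and `k+1`. The support of a vector is locally constant on such a piece, which is therefore a topological sum of
compact boxes of dimension `n`. -/
theorem l2fin_decomposition (ι : Type*) : ∃ F : ℕ → Set (l2Space ι), l2fin ι = ⋃ n, F n ∧
    ∀ n, TopFinDim ↥(F n) ∧ LocallyCompactSpace ↥(F n) := by
  classical
  let B : Finset ι → ℕ → Set (l2Space ι) := fun s k =>
    {x : l2Space ι | (∀ i ∈ s, (1 : ℝ) / (k + 1) ≤ |(x : ι → ℝ) i| ∧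
      |(x : ι → ℝ) i| ≤ k + 1) ∧ ∀ i ∉ s, (x : ι → ℝ) i = 0}
  have hB0 : ∀ {s k x}, x ∈ B s k → ∀ {i}, ((x : ι → ℝ) i ≠ 0 ↔ i ∈ s) := by
    intro s k x hx i
    constructor
    · intro h; by_contra hi; exact h (hx.2 i hi)
    · intro hi h0
      have h1 := (hx.1 i hi).1
      rw [h0, abs_zero] at h1
      exact absurd h1 (not_le.2 (by positivity))
  let F : ℕ → Set (l2Space ι) := fun N => {x | ∃ s : Finset ι, s.card = N.unpair.1 ∧ x ∈ B s N.unpair.2}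
  refine ⟨F, ?_, fun N => ?_⟩
  · ext x
    rw [mem_iUnion]
    constructor
    · intro hx
      change {i | (x : ι → ℝ) i ≠ 0}.Finite at hx
      have hs : ∀ i ∈ hx.toFinset, ∃ k : ℕ, ∀ k' ≥ k, (1 : ℝ) / (k' + 1) ≤ |(x : ι → ℝ) i| := by
        intro i hi
        have h0 : (x : ι → ℝ) i ≠ 0 := by simpa using hi
        obtain ⟨k, hk⟩ := exists_nat_one_div_lt (abs_pos.2 h0)
        refine ⟨k, fun k' hk' => le_trans ?_ hk.le⟩
        have : (k : ℝ) ≤ k' := by exact_mod_cast hk'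
        gcongr
      choose! kf hkf using hs
      obtain ⟨k0, hk0⟩ := exists_nat_ge ‖x‖
      refine ⟨Nat.pair hx.toFinset.card (max k0 (hx.toFinset.sup kf)), hx.toFinset, by simp, ?_⟩
      rw [Nat.unpair_pair]
      refine ⟨fun i hi => ⟨hkf i hi _ ((Finset.le_sup hi).trans (le_max_right _ _)), ?_⟩, ?_⟩
      · refine (l2_abs_apply_le x i).trans (hk0.trans ?_)
        have : (k0 : ℝ) ≤ (max k0 (hx.toFinset.sup kf) : ℕ) := by exact_mod_cast le_max_left _ _
        linarith
      · intro i hi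
        by_contra h
        exact hi (by simpa using h)
    · rintro ⟨N, s, -, hx⟩
      exact s.finite_toSet.subset fun i hi => (hB0 hx).1 hi
  · set n := N.unpair.1
    set k := N.unpair.2
    let A := {s : Finset ι // s.card = n}
    let P : A → Set ↥(F N) := fun s => {x | ∀ i ∈ s.1, ((x : l2Space ι) : ι → ℝ) i ≠ 0}
    have hPB : ∀ (s : A) (x : F N), x ∈ P s → (x : l2Space ι) ∈ B s.1 k := by
      rintro s ⟨x, s', hs', hx⟩ hxs
      have : s.1 ⊆ s' := fun i hi => (hB0 hx).1 (hxs i hi)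
      have e : s.1 = s' := Finset.eq_of_subset_of_card_le this (by rw [hs', s.2])
      rw [e]; exact hx
    have hPo : ∀ s, IsOpen (P s) := by
      intro s
      have : P s = ⋂ i ∈ s.1, {x : ↥(F N) | ((x : l2Space ι) : ι → ℝ) i ≠ 0} := by
        ext; simp [P]
      rw [this]
      exact isOpen_biInter_finset fun i _ =>
        isOpen_ne_fun ((continuous_l2_apply i).comp continuous_subtype_val) continuous_const
    have hPc : ∀ s, IsCompact (P s) := by
      intro s
      rw [IsEmbedding.subtypeVal.isCompact_iff]
      have : Subtype.val '' P s = B s.1 k := by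
        ext x
        constructor
        · rintro ⟨y, hy, rfl⟩; exact hPB s y hy
        · intro hx
          exact ⟨⟨x, s.1, s.2, hx⟩, fun i hi => (hB0 hx).2 hi, rfl⟩
      rw [this]
      exact isCompact_l2_box _ _
    have hcov : ∀ x : F N, ∃ s, x ∈ P s := by
      rintro ⟨x, s, hs, hx⟩
      exact ⟨⟨s, hs⟩, fun i hi => (hB0 hx).2 hi⟩
    constructor
    · refine ⟨2 ^ n, CovDimLE.of_clopen_partition hPo ?_ hcov fun s => ?_⟩
      · intro s t x hs ht
        ext i
        rw [← hB0 (hPB s x hs), ← hB0 (hPB t x ht)]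
      · have := isCompact_iff_compactSpace.1 (hPc s)
        let e := Finset.equivFinOfCardEq s.2
        refine covDimLE_of_injective (φ := fun x j => (((x : F N) : l2Space ι) : ι → ℝ) (e.symm j)) ?_ ?_
        · exact continuous_pi fun j => (continuous_l2_apply _).comp
            (continuous_subtype_val.comp continuous_subtype_val)
        · intro x y hxy
          refine Subtype.ext (Subtype.ext (Subtype.ext (funext fun i => ?_)))
          by_cases hi : i ∈ s.1
          · have := congrFun hxy (e ⟨i, hi⟩)
            simpa using this
          · rw [(hPB s _ x.2).2 i hi, (hPB s _ y.2).2 i hi]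
    · have : WeaklyLocallyCompactSpace ↥(F N) := ⟨fun x => by
        obtain ⟨s, hs⟩ := hcov x
        exact ⟨P s, hPc s, (hPo s).mem_nhds hs⟩⟩
      infer_instance

/-! ### `ℓ₂ᶠ` absorbs finite-dimensional compacta -/

/-- Absorption of finite-dimensional compacta in metric terms: nearness to the identity is measured by a constant
`ε`, and the embedding of `K` is a total function of which only the restriction to `K` matters. -/
def AbsorbsFD {V : Type*} [MetricSpace V] (Y : Set V) : Prop :=
  ∀ K : Set V, FDC K → ∀ B ⊆ K, IsCompact B → B ⊆ Y → ∀ ε > 0,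
    ∃ h : V → V, ContinuousOn h K ∧ InjOn h K ∧ MapsTo h K Y ∧ (∀ x ∈ B, h x = x) ∧
      ∀ x ∈ K, dist (h x) x ≤ ε

/-- Truncation of a real number to `[0, 1]`. -/
def clamp01 (t : ℝ) : ℝ := max 0 (min 1 t)

theorem continuous_clamp01 : Continuous clamp01 := by unfold clamp01; fun_prop
theorem clamp01_nonneg (t : ℝ) : 0 ≤ clamp01 t := le_max_left _ _
theorem clamp01_le_one (t : ℝ) : clamp01 t ≤ 1 := max_le zero_le_one (min_le_left _ _)
theorem clamp01_eq_one {t : ℝ} (h : 1 ≤ t) : clamp01 t = 1 := by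
  rw [clamp01, min_eq_left h]; simp
theorem clamp01_eq_zero {t : ℝ} (h : t ≤ 0) : clamp01 t = 0 := by
  rw [clamp01, max_eq_left]; exact (min_le_right _ _).trans h

/-- A function of `r ≥ 0` equal to `1` for `r ≤ 1/(n+1)` and to `0` for `r ≥ 1/n`; it is constantly `1` for `n = 0`. -/
def lowBump (n : ℕ) (r : ℝ) : ℝ := clamp01 ((n + 1) * (1 - n * r))

/-- A function of `r ≥ 0` equal to `1` on `[1/(n+2), 1/(n+1)]` and to `0` for `r ≤ 1/(n+3)` and, if `n > 0`,
for `r ≥ 1/n`. -/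
def midBump (n : ℕ) (r : ℝ) : ℝ := lowBump n r * clamp01 ((n + 2) * ((n + 3) * r - 1))

theorem continuous_lowBump (n : ℕ) : Continuous (lowBump n) :=
  continuous_clamp01.comp (by fun_prop)

theorem continuous_midBump (n : ℕ) : Continuous (midBump n) :=
  (continuous_lowBump n).mul (continuous_clamp01.comp (by fun_prop))

theorem lowBump_eq_one {n : ℕ} {r : ℝ} (h : (n + 1) * r ≤ 1) : lowBump n r = 1 := by
  refine clamp01_eq_one ?_
  have : (0 : ℝ) ≤ n := by positivity
  nlinarith

theorem lowBump_eq_zero {n : ℕ} {r : ℝ} (h : 1 ≤ n * r) : lowBump n r = 0 := by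
  refine clamp01_eq_zero ?_
  have : (0 : ℝ) ≤ n := by positivity
  nlinarith

theorem midBump_eq_one {n : ℕ} {r : ℝ} (h : (n + 1) * r ≤ 1) (h' : 1 ≤ (n + 2) * r) :
    midBump n r = 1 := by
  have : (0 : ℝ) ≤ n := by positivity
  rw [midBump, lowBump_eq_one h, one_mul]
  refine clamp01_eq_one ?_
  nlinarith

theorem midBump_zero (n : ℕ) : midBump n 0 = 0 := by
  rw [midBump, clamp01_eq_zero, mul_zero]
  have : (0 : ℝ) ≤ n := by positivity
  nlinarith

theorem midBump_mem (n : ℕ) (r : ℝ) : 0 ≤ midBump n r ∧ midBump n r ≤ 1 :=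
  ⟨mul_nonneg (clamp01_nonneg _) (clamp01_nonneg _),
    mul_le_one₀ (clamp01_le_one _) (clamp01_nonneg _) (clamp01_le_one _)⟩

theorem exists_bump_index {r : ℝ} (h0 : 0 < r) (h1 : r ≤ 1) :
    ∃ n : ℕ, (n + 1) * r ≤ 1 ∧ 1 ≤ ((n : ℝ) + 2) * r := by
  have h2 : 1 ≤ 1 / r := by rw [le_div_iff₀ h0]; linarith
  have h3 : 1 ≤ ⌊1 / r⌋₊ := Nat.one_le_floor_iff _ |>.2 h2
  obtain ⟨n, hn⟩ := Nat.exists_eq_add_of_le h3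
  refine ⟨n, ?_, ?_⟩
  · have := Nat.floor_le (a := 1 / r) (by positivity)
    rw [hn, le_div_iff₀ h0] at this
    push_cast at this
    linarith
  · have := (Nat.lt_floor_add_one (1 / r)).le
    rw [hn, div_le_iff₀ h0] at this
    push_cast at this
    linarith

/-- A Euclidean embedding of `K` with entries in `[-1, 1]`, preceded by the constant entry `f 0 = 1` and
continued by zeros. -/
theorem FDC.exists_bounded_map {V : Type*} [MetricSpace V] {K : Set V} (h : FDC K) :
    ∃ (m : ℕ) (f : ℕ → V → ℝ), (∀ i, Continuous (f i)) ∧ (∀ i x, |f i x| ≤ 1) ∧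
      (∀ x, f 0 x = 1) ∧ (∀ i > m, ∀ x, f i x = 0) ∧
      ∀ x ∈ K, ∀ y ∈ K, (∀ i, f i x = f i y) → x = y := by
  obtain ⟨hK, m, φ, hc, hi⟩ := h
  obtain ⟨r, hr⟩ := (hK.image_of_continuousOn hc).isBounded.exists_norm_le
  set R := max r 0 + 1 with hR
  have hR0 : 0 < R := by positivity
  obtain ⟨G, hG, hGe, hGn⟩ := exists_factor_extension hK continuousOn_id (hc.const_smul R⁻¹)
    (by rintro x - y - h; exact congrArg (R⁻¹ • φ) h) 1 zero_le_one
    (fun x hx => by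
      rw [Pi.smul_apply, norm_smul, norm_inv, Real.norm_of_nonneg hR0.le, inv_mul_le_iff₀ hR0, mul_one]
      have := hr _ (mem_image_of_mem _ hx)
      linarith [le_max_left r 0])
  rw [continuous_pi_iff] at hG
  refine ⟨m, fun i x => if i = 0 then 1 else if h : i - 1 < m then G x ⟨i - 1, h⟩ else 0,
    fun i => ?_, fun i x => ?_, fun x => by simp, fun i hi x => ?_, fun x hx y hy h => ?_⟩
  · by_cases h0 : i = 0
    · simp only [h0, if_true]; exact continuous_const
    · simp only [h0, if_false]
      by_cases h1 : i - 1 < m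
      · simp only [h1, dif_pos]; exact hG _
      · simp only [h1, dif_neg, not_false_eq_true]; exact continuous_const
  · dsimp only
    split_ifs with h0 h1
    · simp
    · exact (norm_le_pi_norm (G x) _).trans (hGn x)
    · simp
  · dsimp only
    rw [if_neg (by omega), dif_neg (by omega)]
  · refine hi hx hy ?_
    have h1 : G x = G y := by
      funext j
      have := h (j + 1)
      simpa using this
    have ex := hGe x hx
    have ey := hGe y hy
    simp only [id] at ex ey
    rw [ex, ey] at h1
    have hRinv := inv_ne_zero hR0.ne'
    exact smul_right_injective _ hRinv h1

/-- The embedding is `x ↦ p x + Φ x`. Let `ρ ≥ 0` be a function with zero set `B`. The map `p` truncates `x` to finite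
sets of coordinates that grow as `ρ x → 0`, so `p` is the identity on `B` and has finitely supported values
off `B`. The map `Φ` vanishes on `B`, and off `B` it writes a Euclidean embedding of `K` into finitely many
coordinates not used by `p`, which makes the sum injective. -/
theorem l2fin_absorbsFD (ι : Type*) [Infinite ι] : AbsorbsFD (l2fin ι) := by
  classical
  intro K hK B hBK hBc hBY ε hε
  obtain ⟨m, f, hfc, hf1, hf0, hfm, hfi⟩ := hK.exists_bounded_map
  obtain ⟨ρ, hρc, hρ1, hρB⟩ := exists_zero_set_function hBc.isClosed
  let δ : ℕ → ℝ := fun n => ε / 4 / 2 / 2 ^ n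
  have hδ0 : ∀ n, 0 < δ n := fun n => by positivity
  have hδs : HasSum δ (ε / 4) := hasSum_geometric_two' _
  choose S' hS' using fun n => hK.1.exists_finset_tail_le (hδ0 n)
  let S : ℕ → Finset ι := fun n => (Finset.range (n + 1)).biUnion S'
  have hSmono : Monotone S := fun a b hab =>
    Finset.biUnion_subset_biUnion_of_subset_left _ (Finset.range_mono (by omega))
  have hS : ∀ n, ∀ x ∈ K, ‖coordProj (S n : Set ι)ᶜ x‖ ≤ δ n := fun n x hx =>
    (coordProj_mono (compl_subset_compl.2 (Finset.coe_subset.2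
      (Finset.subset_biUnion_of_mem S' (Finset.mem_range.2 n.lt_succ_self)))) x).trans (hS' n x hx)
  -- Outside `N k` the entries of points of `K` are at most half of the weight `δ k` of the `k`-th tag.
  choose N hN using fun k => hK.1.exists_finset_tail_le (half_pos (hδ0 k))
  obtain ⟨w, hwi, hwT⟩ := exists_injective_avoiding fun k : ℕ => S (k.unpair.1 + 2) ∪ N k
  obtain ⟨Φ, hΦc, hΦn, hΦw, hΦ0⟩ := exists_tag_map w hwi δ (fun n => (hδ0 n).le) hδs.summable
    (fun k x => midBump k.unpair.1 (ρ x) * f k.unpair.2 x)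
    (fun k => ((continuous_midBump _).comp hρc).mul (hfc _))
    (fun k x => by
      rw [abs_mul, abs_of_nonneg (midBump_mem _ _).1]
      exact mul_le_one₀ (midBump_mem _ _).2 (abs_nonneg _) (hf1 _ _))
  let D : ℕ → l2Space ι → l2Space ι := fun n x =>
    coordProj (S (n + 1) : Set ι) x - coordProj (S n : Set ι) x
  have hDn : ∀ n, ∀ x ∈ K, ‖D n x‖ ≤ δ n := by
    intro n x hx
    have : D n x = coordProj (S (n + 1) : Set ι) (coordProj (S n : Set ι)ᶜ x) := by
      rw [coordProj_compl, map_sub, coordProj_coordProj (S (n+1) : Set ι) (S n : Set ι),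
        inter_eq_right.2 (Finset.coe_subset.2 (hSmono n.le_succ))]
    rw [this]
    exact (coordProj_norm_le _ _).trans (hS n x hx)
  have hbD : ∀ n, ∀ x ∈ K, ‖lowBump n (ρ x) • D n x‖ ≤ δ n := by
    intro n x hx
    rw [norm_smul, Real.norm_of_nonneg (show 0 ≤ lowBump n (ρ x) from clamp01_nonneg _)]
    exact (mul_le_of_le_one_left (norm_nonneg _) (clamp01_le_one _)).trans (hDn n x hx)
  have hsum : ∀ x ∈ K, Summable fun n => lowBump n (ρ x) • D n x := fun x hx =>
    Summable.of_norm_bounded hδs.summable fun n => hbD n x hx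
  -- If `1/(n+2) ≤ ρ x`, the terms with index at least `n + 2` vanish; if `ρ x = 0`, the sum telescopes to `x`.
  let p : l2Space ι → l2Space ι := fun x =>
    coordProj (S 0 : Set ι) x + ∑' n, lowBump n (ρ x) • D n x
  have hpc : ContinuousOn p K := by
    refine ContinuousOn.add (by fun_prop) (continuousOn_tsum (fun n => Continuous.continuousOn ?_)
      hδs.summable hbD)
    have := (continuous_lowBump n).comp hρc
    simp only [Function.comp_def] at this
    fun_prop
  have hp0 : ∀ x ∈ K, ∀ n : ℕ, 1 ≤ ((n : ℝ) + 2) * ρ x →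
      coordProj (S (n + 2) : Set ι)ᶜ (p x) = 0 := by
    intro x hx n hn
    have hle : ∀ j ≤ n + 2, coordProj (S (n + 2) : Set ι)ᶜ (coordProj (S j : Set ι) x) = 0 :=
      fun j hj => coordProj_zero_of_disjoint (disjoint_compl_left_iff_subset.2
        (Finset.coe_subset.2 (hSmono hj))) x
    simp only [p]
    rw [map_add, hle 0 (by omega), zero_add, ContinuousLinearMap.map_tsum _ (hsum x hx)]
    convert tsum_zero with j
    rw [map_smul]
    by_cases hj : j + 1 ≤ n + 2
    · rw [map_sub, hle _ hj, hle _ (by omega), sub_zero, smul_zero]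
    · rw [lowBump_eq_zero, zero_smul]
      have : (n : ℝ) + 2 ≤ j := by exact_mod_cast (by omega : n + 2 ≤ j)
      nlinarith [(hρ1 x).1]
  have hpB : ∀ x ∈ B, p x = x := by
    intro x hx
    have hρx := (hρB x).2 hx
    have e : ∀ n, lowBump n (ρ x) • D n x = D n x := fun n => by
      rw [lowBump_eq_one (by rw [hρx]; simp), one_smul]
    have hs := hsum x (hBK hx)
    simp only [e] at hs
    have h1 := hs.hasSum.tendsto_sum_nat
    simp only [D] at h1
    simp only [Finset.sum_range_sub (fun n => coordProj (S n : Set ι) x)] at h1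
    have h2 : Filter.Tendsto (fun n => coordProj (S n : Set ι) x - coordProj (S 0 : Set ι) x)
        Filter.atTop (𝓝 (x - coordProj (S 0 : Set ι) x)) := by
      refine Filter.Tendsto.sub_const ?_ _
      rw [tendsto_iff_norm_sub_tendsto_zero]
      refine squeeze_zero (fun _ => norm_nonneg _) (fun n => ?_) hδs.summable.tendsto_atTop_zero
      rw [norm_sub_rev, ← coordProj_compl]
      exact hS n x (hBK hx)
    have h3 := tendsto_nhds_unique h1 h2
    simp only [p, e, D]
    rw [h3, add_sub_cancel]
  have hpw : ∀ x ∈ K, ∀ n i : ℕ, 1 ≤ ((n : ℝ) + 2) * ρ x →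
      (p x : ι → ℝ) (w (Nat.pair n i)) = 0 := by
    intro x hx n i hn
    have hw : w (Nat.pair n i) ∈ (S (n + 2) : Set ι)ᶜ := by
      have := hwT (Nat.pair n i)
      rw [Nat.unpair_pair] at this
      exact fun h => this (Finset.mem_union_left _ h)
    rw [← coordProj_apply_mem (p x) hw, hp0 x hx n hn]
    rfl
  have hΦB : ∀ x ∈ B, Φ x = 0 := by
    intro x hx
    ext i
    by_cases hi : i ∈ range w
    · obtain ⟨k, rfl⟩ := hi
      rw [hΦw, (hρB x).2 hx, midBump_zero]
      simp
    · exact hΦ0 x i hi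
  have hρpos : ∀ x ∉ B, 0 < ρ x := fun x hx =>
    lt_of_le_of_ne (hρ1 x).1 fun h => hx ((hρB x).1 h.symm)
  have hhB : ∀ x ∈ B, p x + Φ x = x := fun x hx => by rw [hpB x hx, hΦB x hx, add_zero]
  have hval : ∀ x ∈ K, ∀ n i : ℕ, 1 ≤ ((n : ℝ) + 2) * ρ x →
      ((p x + Φ x : l2Space ι) : ι → ℝ) (w (Nat.pair n i)) =
        δ (Nat.pair n i) * (midBump n (ρ x) * f i x) := by
    intro x hx n i hn
    rw [lp.coeFn_add, Pi.add_apply, hpw x hx n i hn, zero_add, hΦw, Nat.unpair_pair]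
  have hinj1 : ∀ x ∈ K, ∀ y ∈ K, x ∉ B → y ∉ B → ρ y ≤ ρ x → p x + Φ x = p y + Φ y → x = y := by
    intro x hx y hy hxB hyB hle h
    -- At the level `n` of the point with the smaller value of `ρ`, neither truncation interferes with the tags.
    -- The constant entry `f 0 = 1` shows that the bump factor of `x` is `1`.
    obtain ⟨n, hn1, hn2⟩ := exists_bump_index (hρpos y hyB) (hρ1 y).2
    have hn3 : 1 ≤ ((n : ℝ) + 2) * ρ x := hn2.trans (by gcongr)
    have key : ∀ i, midBump n (ρ x) * f i x = f i y := by
      intro i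
      have h1 := hval x hx n i hn3
      rw [h, hval y hy n i hn2, midBump_eq_one hn1 hn2, one_mul] at h1
      exact (mul_left_cancel₀ (hδ0 _).ne' h1).symm
    have h0 := key 0
    rw [hf0, hf0, mul_one] at h0
    refine hfi x hx y hy fun i => ?_
    rw [← key i, h0, one_mul]
  have hinj2 : ∀ x ∈ B, ∀ y ∈ K, y ∉ B → p x + Φ x ≠ p y + Φ y := by
    intro x hx y hy hyB h
    obtain ⟨n, hn1, hn2⟩ := exists_bump_index (hρpos y hyB) (hρ1 y).2
    -- The `0`-th tag entry of `y` equals its weight, which exceeds the corresponding entry of any point of `B`.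
    have h1 := hval y hy n 0 hn2
    rw [← h, hhB x hx, midBump_eq_one hn1 hn2, hf0, mul_one, mul_one] at h1
    have hw : w (Nat.pair n 0) ∈ (N (Nat.pair n 0) : Set ι)ᶜ := fun h =>
      hwT (Nat.pair n 0) (Finset.mem_union_right _ h)
    have h2 := (l2_abs_apply_le _ (w (Nat.pair n 0))).trans (hN (Nat.pair n 0) x (hBK hx))
    rw [coordProj_apply_mem x hw, h1, abs_of_pos (hδ0 _)] at h2
    linarith [hδ0 (Nat.pair n 0)]
  refine ⟨fun x => p x + Φ x, hpc.add hΦc.continuousOn, ?_, ?_, hhB, ?_⟩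
  · intro x hx y hy h
    by_cases hxB : x ∈ B
    · by_cases hyB : y ∈ B
      · have h' : p x + Φ x = p y + Φ y := h
        rwa [hhB x hxB, hhB y hyB] at h'
      · exact absurd h (hinj2 x hxB y hy hyB)
    · by_cases hyB : y ∈ B
      · exact absurd h.symm (hinj2 y hyB x hx hxB)
      · rcases le_total (ρ y) (ρ x) with hle | hle
        · exact hinj1 x hx y hy hxB hyB hle h
        · exact (hinj1 y hy x hx hyB hxB hle h.symm).symm
  · intro x hx
    by_cases hxB : x ∈ B
    · have := hhB x hxB
      simp only [this]
      exact hBY hxB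
    · obtain ⟨n, hn1, hn2⟩ := exists_bump_index (hρpos x hxB) (hρ1 x).2
      have hsub : {i | ((p x + Φ x : l2Space ι) : ι → ℝ) i ≠ 0} ⊆
          (S (n + 2) : Set ι) ∪ (fun q : ℕ × ℕ => w (Nat.pair q.1 q.2)) ''
            (Iic (n + 2) ×ˢ Iic m) := by
        intro i hi
        by_contra hcon
        rw [mem_union, not_or] at hcon
        apply hi
        have h1 : (p x : ι → ℝ) i = 0 := by
          rw [← coordProj_apply_mem (J := (S (n + 2) : Set ι)ᶜ) (p x) hcon.1, hp0 x hx n hn2]; rfl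
        rw [lp.coeFn_add, Pi.add_apply, h1, zero_add]
        by_cases hiw : i ∈ range w
        · obtain ⟨k, rfl⟩ := hiw
          rw [hΦw]
          by_cases hk2 : k.unpair.2 ≤ m
          · have hk1 : n + 2 < k.unpair.1 := by
              by_contra hk1
              exact hcon.2 ⟨k.unpair, ⟨not_lt.1 hk1, hk2⟩, by
                change w (Nat.pair k.unpair.1 k.unpair.2) = w k
                rw [Nat.pair_unpair]⟩
            rw [midBump, lowBump_eq_zero]
            · simp
            · have : (n : ℝ) + 2 ≤ k.unpair.1 := by exact_mod_cast hk1.le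
              nlinarith [(hρ1 x).1]
          · rw [hfm _ (not_le.1 hk2)]; simp
        · exact hΦ0 x i hiw
      exact ((Finset.finite_toSet _).union (((finite_Iic _).prod (finite_Iic _)).image _)).subset hsub
  · intro x hx
    have h1 : ‖∑' n, lowBump n (ρ x) • D n x‖ ≤ ε / 4 := by
      rw [← hδs.tsum_eq]
      exact tsum_of_norm_bounded hδs.summable.hasSum fun n => hbD n x hx
    have h2 := hΦn x
    rw [hδs.tsum_eq] at h2
    have h3 := hS 0 x hx
    have h4 : δ 0 ≤ ε / 4 := by simp only [δ]; norm_num; linarith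
    have e : p x + Φ x - x = (∑' n, lowBump n (ρ x) • D n x) + Φ x - coordProj (S 0 : Set ι)ᶜ x := by
      rw [coordProj_compl]; simp only [p]; abel
    rw [dist_eq_norm, e]
    have := norm_sub_le ((∑' n, lowBump n (ρ x) • D n x) + Φ x) (coordProj (S 0 : Set ι)ᶜ x)
    have := norm_add_le (∑' n, lowBump n (ρ x) • D n x) (Φ x)
    linarith

/-! ### Discrete unions of finite-dimensional compacta -/

/-- `A` is the union of a discrete family of finite-dimensional compacta: every point of the ambient space has a
neighbourhood that meets at most one member. The index type lives in the universe of the space. -/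
def IsDiscreteFDC {V : Type u} [MetricSpace V] (A : Set V) : Prop :=
  ∃ (I : Type u) (C : I → Set V), A = ⋃ i, C i ∧ (∀ i, FDC (C i)) ∧
    ∀ p, ∃ U ∈ 𝓝 p, ∀ i j, (C i ∩ U).Nonempty → (C j ∩ U).Nonempty → i = j

theorem IsDiscreteFDC.image {V : Type u} [MetricSpace V] {A : Set V} (h : IsDiscreteFDC A)
    (θ : V ≃ₜ V) : IsDiscreteFDC (θ '' A) := by
  obtain ⟨I, C, rfl, hC, hd⟩ := h
  refine ⟨I, fun i => θ '' C i, image_iUnion, fun i =>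
    (hC i).image θ.continuous.continuousOn θ.injective.injOn, fun p => ?_⟩
  obtain ⟨U, hU, hUd⟩ := hd (θ.symm p)
  refine ⟨θ.symm ⁻¹' U, θ.symm.continuous.continuousAt hU, fun i j hi hj => hUd i j ?_ ?_⟩
  · obtain ⟨_, ⟨x, hx, rfl⟩, hxU⟩ := hi
    exact ⟨x, hx, by simpa using hxU⟩
  · obtain ⟨_, ⟨x, hx, rfl⟩, hxU⟩ := hj
    exact ⟨x, hx, by simpa using hxU⟩

/-- Stone's argument: well-order the points of `F`, attach to each `x` a compact ball of radius `r x`, and let `S n x`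
consist of the points whose first ball is that of `x` and which lie in it at depth at least `1/(n+1)`.
For fixed `n` distinct sets `S n x` are at distance at least `1/(n+1)`, hence the family of their closures is
discrete, even in the ambient space `V`. -/
theorem exists_discrete_decomposition {V : Type u} [MetricSpace V] (F : Set V) (hF : TopFinDim ↥F)
    [LocallyCompactSpace ↥F] : ∃ A : ℕ → Set V, F = ⋃ n, A n ∧ ∀ n, IsDiscreteFDC (A n) := by
  choose r hr0 hrc using fun x : F => Metric.exists_isCompact_closedBall x
  have wf : WellFounded (WellOrderingRel (α := F)) := WellOrderingRel.isWellOrder.wf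
  have hne : ∀ y : F, {x : F | dist y x < r x}.Nonempty := fun y => ⟨y, by simpa using hr0 y⟩
  let μ : F → F := fun y => wf.min _ (hne y)
  have hμ : ∀ y, dist y (μ y) < r (μ y) := fun y => wf.min_mem _ (hne y)
  have hμlt : ∀ y x, WellOrderingRel x (μ y) → r x ≤ dist y x := fun y x h => by
    by_contra hcon
    exact wf.not_lt_min {x : F | dist y x < r x} (not_le.1 hcon) h
  let S : ℕ → F → Set F := fun n x => {y | μ y = x ∧ dist y x + 1 / ((n : ℝ) + 1) ≤ r x}
  have hsep1 : ∀ n x x', WellOrderingRel x x' → ∀ y ∈ S n x, ∀ y' ∈ S n x',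
      1 / ((n : ℝ) + 1) ≤ dist y y' := by
    rintro n x x' hlt y ⟨rfl, hy⟩ y' ⟨rfl, hy'⟩
    have h1 := hμlt _ _ hlt
    have h2 := dist_triangle_left y' (μ y) y
    linarith
  have hsep : ∀ n x x', x ≠ x' → ∀ y ∈ S n x, ∀ y' ∈ S n x', 1 / ((n : ℝ) + 1) ≤ dist y y' := by
    intro n x x' hxx y hy y' hy'
    rcases trichotomous_of WellOrderingRel x x' with h | h | h
    · exact hsep1 n x x' h y hy y' hy'
    · exact absurd h hxx
    · rw [dist_comm]; exact hsep1 n x' x h y' hy' y hy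
  have hsepc : ∀ n x x', x ≠ x' → ∀ y ∈ closure (S n x), ∀ y' ∈ closure (S n x'),
      1 / ((n : ℝ) + 1) ≤ dist y y' := by
    intro n x x' hxx y hy y' hy'
    have hmem : ((y, y') : F × F) ∈ closure (S n x ×ˢ S n x') := by
      rw [closure_prod_eq]; exact ⟨hy, hy'⟩
    have hcl : IsClosed {q : F × F | 1 / ((n : ℝ) + 1) ≤ dist q.1 q.2} :=
      isClosed_le continuous_const (by fun_prop)
    exact closure_minimal (fun q hq => hsep n x x' hxx _ hq.1 _ hq.2) hcl hmem
  refine ⟨fun n => ⋃ x, Subtype.val '' closure (S n x), ?_, fun n => ?_⟩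
  · ext y
    simp only [mem_iUnion]
    constructor
    · intro hy
      obtain ⟨n, hn⟩ := exists_nat_one_div_lt (sub_pos.2 (hμ ⟨y, hy⟩))
      exact ⟨n, μ ⟨y, hy⟩, ⟨y, hy⟩, subset_closure ⟨rfl, by linarith⟩, rfl⟩
    · rintro ⟨n, x, y, -, rfl⟩; exact y.2
  · refine ⟨F, _, rfl, fun x => ?_, fun p => ?_⟩
    · refine FDC.image (FDC.of_topFinDim ?_ ?_) continuous_subtype_val.continuousOn
        Subtype.val_injective.injOn
      · refine (hrc x).of_isClosed_subset isClosed_closure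
          (closure_minimal ?_ Metric.isClosed_closedBall)
        rintro y ⟨-, hy⟩
        have : (0 : ℝ) < 1 / ((n : ℝ) + 1) := by positivity
        rw [Metric.mem_closedBall]; linarith
      · obtain ⟨N, hN⟩ := hF
        exact ⟨N, hN.of_isClosedEmbedding isClosed_closure.isClosedEmbedding_subtypeVal⟩
    · refine ⟨Metric.ball p (1 / ((n : ℝ) + 1) / 2), Metric.ball_mem_nhds _ (by positivity), ?_⟩
      rintro x x' ⟨_, ⟨y, hy, rfl⟩, hyp⟩ ⟨_, ⟨y', hy', rfl⟩, hyp'⟩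
      by_contra hxx
      have h1 := hsepc n x x' hxx y hy y' hy'
      have h2 : dist y y' = dist (y : V) y' := rfl
      have h3 := dist_triangle_right (y : V) y' p
      rw [Metric.mem_ball] at hyp hyp'
      linarith

theorem exists_sigma_discrete {V : Type u} [MetricSpace V] {Y : Set V}
    (h : ∃ F : ℕ → Set V, Y = ⋃ n, F n ∧ ∀ n, TopFinDim ↥(F n) ∧ LocallyCompactSpace ↥(F n)) :
    ∃ A : ℕ → Set V, Y = ⋃ n, A n ∧ ∀ n, IsDiscreteFDC (A n) := by
  obtain ⟨F, rfl, hF⟩ := h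
  have := fun n => (by
    have := (hF n).2
    exact exists_discrete_decomposition (F n) (hF n).1)
  choose A hA hAd using this
  refine ⟨fun k => A k.unpair.1 k.unpair.2, ?_, fun k => hAd _ _⟩
  ext y
  simp only [mem_iUnion]
  constructor
  · rintro ⟨n, hn⟩
    rw [hA n, mem_iUnion] at hn
    obtain ⟨k, hk⟩ := hn
    exact ⟨Nat.pair n k, by simpa using hk⟩
  · rintro ⟨k, hk⟩
    refine ⟨k.unpair.1, ?_⟩
    rw [hA]
    exact mem_iUnion.2 ⟨_, hk⟩

/-! ### Moving discrete unions into an absorbing set -/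

/-- `C` is closed and locally a finite-dimensional compactum, as seen from every point of the ambient space. -/
def LocFDC {V : Type*} [MetricSpace V] (C : Set V) : Prop :=
  ∀ p, ∃ N ∈ 𝓝 p, IsClosed N ∧ FDC (C ∩ N)

section LocFDC
variable {V : Type u} [MetricSpace V] {C C' : Set V}

theorem LocFDC.empty : LocFDC (∅ : Set V) := fun _ =>
  ⟨univ, Filter.univ_mem, isClosed_univ, by rw [empty_inter]; exact FDC.empty⟩

theorem LocFDC.union (h : LocFDC C) (h' : LocFDC C') : LocFDC (C ∪ C') := by
  intro p
  obtain ⟨N, hN, hNc, hCN⟩ := h p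
  obtain ⟨N', hN', hNc', hCN'⟩ := h' p
  refine ⟨N ∩ N', Filter.inter_mem hN hN', hNc.inter hNc', ?_⟩
  rw [union_inter_distrib_right]
  refine FDC.union ?_ ?_
  · rw [← inter_assoc]
    exact hCN.mono (hCN.1.inter_right hNc') inter_subset_left
  · rw [inter_comm N, ← inter_assoc]
    exact hCN'.mono (hCN'.1.inter_right hNc) inter_subset_left

theorem LocFDC.image (h : LocFDC C) (θ : V ≃ₜ V) : LocFDC (θ '' C) := by
  intro p
  obtain ⟨N, hN, hNc, hCN⟩ := h (θ.symm p)
  refine ⟨θ '' N, ?_, θ.isClosedMap _ hNc, ?_⟩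
  · have := θ.isOpenMap.image_mem_nhds hN
    rwa [θ.apply_symm_apply] at this
  · rw [← image_inter θ.injective]
    exact hCN.image θ.continuous.continuousOn θ.injective.injOn

theorem IsDiscreteFDC.locFDC {A : Set V} (h : IsDiscreteFDC A) : LocFDC A := by
  obtain ⟨I, K, rfl, hK, hd⟩ := h
  intro p
  obtain ⟨U, hU, hUd⟩ := hd p
  obtain ⟨r, hr, hrU⟩ := Metric.nhds_basis_closedBall.mem_iff.1 hU
  refine ⟨Metric.closedBall p r, Metric.closedBall_mem_nhds _ hr, Metric.isClosed_closedBall, ?_⟩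
  rcases ((⋃ i, K i) ∩ Metric.closedBall p r).eq_empty_or_nonempty with he | ⟨x, hx, hxB⟩
  · rw [he]; exact FDC.empty
  · obtain ⟨i, hi⟩ := mem_iUnion.1 hx
    have : (⋃ i, K i) ∩ Metric.closedBall p r = K i ∩ Metric.closedBall p r := by
      ext y
      refine ⟨fun ⟨hy, hyB⟩ => ⟨?_, hyB⟩, fun ⟨hy, hyB⟩ => ⟨mem_iUnion.2 ⟨i, hy⟩, hyB⟩⟩
      obtain ⟨j, hj⟩ := mem_iUnion.1 hy
      rwa [hUd i j ⟨x, hi, hrU hxB⟩ ⟨y, hj, hrU hyB⟩]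
    rw [this]
    exact (hK i).mono ((hK i).1.inter_right Metric.isClosed_closedBall) inter_subset_left

theorem LocFDC.exists_near_compact (h : LocFDC C) {K : Set V} (hK : IsCompact K) :
    ∃ D, FDC D ∧ D ⊆ C ∧ ∃ ε > 0, C ∩ Metric.thickening ε K ⊆ D := by
  obtain ⟨D, hD, hDC, O, hO, hKO, hCO⟩ : ∃ D, FDC D ∧ D ⊆ C ∧ ∃ O, IsOpen O ∧ K ⊆ O ∧ C ∩ O ⊆ D := by
    refine hK.induction_on ?_ ?_ ?_ ?_
    · exact ⟨∅, FDC.empty, empty_subset _, ∅, isOpen_empty, subset_rfl, by simp⟩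
    · rintro s t hst ⟨D, hD, hDC, O, hO, hsO, hCO⟩
      exact ⟨D, hD, hDC, O, hO, hst.trans hsO, hCO⟩
    · rintro s t ⟨D, hD, hDC, O, hO, hsO, hCO⟩ ⟨D', hD', hDC', O', hO', hsO', hCO'⟩
      refine ⟨D ∪ D', hD.union hD', union_subset hDC hDC', O ∪ O', hO.union hO',
        union_subset_union hsO hsO', ?_⟩
      rw [inter_union_distrib_left]
      exact union_subset_union hCO hCO'
    · intro x _
      obtain ⟨N, hN, -, hCN⟩ := h x
      refine ⟨interior N, mem_nhdsWithin_of_mem_nhds (interior_mem_nhds.2 hN), C ∩ N, hCN,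
        inter_subset_left, interior N, isOpen_interior, subset_rfl,
        inter_subset_inter_right _ interior_subset⟩
  obtain ⟨ε, hε, hεO⟩ := hK.exists_thickening_subset_open hO hKO
  exact ⟨D, hD, hDC, ε, hε, (inter_subset_inter_right _ hεO).trans hCO⟩

end LocFDC

/-- Absorption and unknotting combined: a finite-dimensional compactum `K` is moved into `Y` by a small
homeomorphism supported near `K` that fixes a given `C ⊆ Y`. -/
theorem exists_compact_move {ι : Type u} [Infinite ι] {Y C K : Set (l2Space ι)} (hY : AbsorbsFD Y)
    (hC : LocFDC C) (hCY : C ⊆ Y) (hK : FDC K) {ε : ℝ} (hε : 0 < ε) :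
    ∃ θ : l2Space ι ≃ₜ l2Space ι, (∀ c ∈ C, θ c = c) ∧ MapsTo θ K Y ∧
      (∀ p ∉ Metric.thickening ε K, θ p = p) ∧ ∀ p, dist (θ p) p < ε := by
  rcases K.eq_empty_or_nonempty with rfl | hne
  · exact ⟨Homeomorph.refl _, fun _ _ => rfl, mapsTo_empty _ _, fun _ _ => rfl, fun p => by simpa using hε⟩
  obtain ⟨D, hD, hDC, ε', hε', hCD⟩ := hC.exists_near_compact hK.1
  set e := min ε ε'
  have he : 0 < e := lt_min hε hε'
  obtain ⟨h, hc, hi, hm, hid, hn⟩ := hY (K ∪ D) (hK.union hD) D subset_union_right hD.1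
    (hDC.trans hCY) (e / 10) (by positivity)
  obtain ⟨θ, hθ, hθs, hθn⟩ := unknot_compact (hK.union hD).1 hD.1 (A := K)
    (by rintro x ⟨hx | hx, hxD⟩; exacts [hx, absurd hx hxD]) hc hi hid hne he
    (fun x hx => by rw [← dist_eq_norm]; exact hn x hx)
  have hfar : ∀ p, p ∉ Metric.thickening e K → θ p = p := fun p hp =>
    hθs p (by rwa [Metric.mem_thickening_iff_infDist_lt hne, not_lt] at hp)
  refine ⟨θ, fun c hc => ?_, fun x hx => ?_, fun p hp => ?_, fun p => ?_⟩
  · by_cases hcK : c ∈ Metric.thickening e K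
    · have : c ∈ D := hCD ⟨hc, Metric.thickening_mono (min_le_right _ _) _ hcK⟩
      rw [hθ c (Or.inr this), hid c this]
    · exact hfar c hcK
  · rw [hθ x (Or.inl hx)]
    exact hm (Or.inl hx)
  · exact hfar p fun h => hp (Metric.thickening_mono (min_le_left _ _) _ h)
  · rw [dist_eq_norm]
    exact (hθn p).trans_le (min_le_left _ _)

/-- Homeomorphisms supported in the members of a discrete family are glued. -/
theorem exists_glued_homeomorph {X I : Type*} [TopologicalSpace X] (T : I → Set X) (θ : I → X ≃ₜ X)
    (hθ : ∀ i, ∀ p ∉ T i, θ i p = p)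
    (hT : ∀ p, ∃ U ∈ 𝓝 p, ∀ i j, (T i ∩ U).Nonempty → (T j ∩ U).Nonempty → i = j) :
    ∃ Θ : X ≃ₜ X, (∀ i, ∀ p ∈ T i, Θ p = θ i p) ∧ ∀ p, (∀ i, p ∉ T i) → Θ p = p := by
  classical
  have hdisj : ∀ p i j, p ∈ T i → p ∈ T j → i = j := by
    intro p i j hi hj
    obtain ⟨U, hU, h⟩ := hT p
    exact h i j ⟨p, hi, mem_of_mem_nhds hU⟩ ⟨p, hj, mem_of_mem_nhds hU⟩
  let g : (I → X ≃ₜ X) → X → X := fun θ p => if h : ∃ i, p ∈ T i then θ h.choose p else p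
  have hg1 : ∀ θ i, ∀ p ∈ T i, g θ p = θ i p := by
    intro θ i p hp
    have hex : ∃ i, p ∈ T i := ⟨i, hp⟩
    simp only [g, dif_pos hex]
    rw [hdisj p _ i hex.choose_spec hp]
  have hg2 : ∀ θ p, (∀ i, p ∉ T i) → g θ p = p := by
    intro θ p hp
    simp only [g]
    rw [dif_neg (by push Not; exact hp)]
  have hgc : ∀ θ : I → X ≃ₜ X, (∀ i, ∀ p ∉ T i, θ i p = p) → Continuous (g θ) := by
    intro θ hθ
    rw [continuous_iff_continuousAt]
    intro p
    obtain ⟨U, hU, h⟩ := hT p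
    by_cases hex : ∃ i, (T i ∩ U).Nonempty
    · obtain ⟨i, hi⟩ := hex
      refine (θ i).continuous.continuousAt.congr ?_
      filter_upwards [hU] with q hq
      by_cases hqT : q ∈ T i
      · exact (hg1 θ i q hqT).symm
      · rw [hθ i q hqT, hg2]
        intro j hj
        rw [h i j hi ⟨q, hj, hq⟩] at hqT
        exact hqT hj
    · refine continuousAt_id.congr ?_
      filter_upwards [hU] with q hq
      rw [hg2 θ q fun j hj => hex ⟨j, q, hj, hq⟩]
      rfl
  have hsymm : ∀ i, ∀ p ∉ T i, (θ i).symm p = p := fun i p hp => by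
    rw [Homeomorph.symm_apply_eq, hθ i p hp]
  have hmaps : ∀ θ : I → X ≃ₜ X, (∀ i, ∀ p ∉ T i, θ i p = p) → ∀ i, ∀ p ∈ T i, θ i p ∈ T i := by
    intro θ hθ i p hp
    by_contra hcon
    have := (θ i).injective (hθ i _ hcon)
    exact hcon (by rwa [this])
  have hinv : ∀ θ : I → X ≃ₜ X, (∀ i, ∀ p ∉ T i, θ i p = p) → ∀ p,
      g (fun i => (θ i).symm) (g θ p) = p := by
    intro θ hθ p
    by_cases hex : ∃ i, p ∈ T i
    · obtain ⟨i, hi⟩ := hex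
      rw [hg1 θ i p hi, hg1 (fun i => (θ i).symm) i _ (hmaps θ hθ i p hi),
        Homeomorph.symm_apply_apply]
    · push Not at hex
      rw [hg2 θ p hex, hg2 (fun i => (θ i).symm) p hex]
  exact ⟨⟨⟨g θ, g fun i => (θ i).symm, hinv θ hθ, hinv (fun i => (θ i).symm) hsymm⟩,
    hgc θ hθ, hgc _ hsymm⟩, hg1 θ, hg2 θ⟩

theorem IsCompact.exists_uniform_near {V W : Type*} [MetricSpace V] [MetricSpace W] {K : Set V}
    (hK : IsCompact K) {G : V → W} (hG : Continuous G) {η : ℝ} (hη : 0 < η) :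
    ∃ δ > 0, ∀ p ∈ Metric.thickening δ K, ∀ q, dist q p < δ → dist (G q) (G p) < η := by
  obtain ⟨δ, hδ, h⟩ := lebesgue_number_lemma_of_metric (c := fun x : V => G ⁻¹' Metric.ball (G x) (η / 2))
    hK (fun x => Metric.isOpen_ball.preimage hG)
    (fun x _ => mem_iUnion.2 ⟨x, Metric.mem_ball_self (half_pos hη)⟩)
  refine ⟨δ / 2, half_pos hδ, fun p hp q hq => ?_⟩
  obtain ⟨x, hx, hxp⟩ := Metric.mem_thickening_iff.1 hp
  obtain ⟨z, hz⟩ := h x hx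
  have h1 : dist (G p) (G z) < η / 2 := hz (by rw [Metric.mem_ball]; linarith)
  have h2 : dist (G q) (G z) < η / 2 := hz (by
    rw [Metric.mem_ball]; linarith [dist_triangle q p x])
  linarith [dist_triangle_right (G q) (G p) (G z)]

/-- A discrete union `A` of finite-dimensional compacta is moved into `Y` at once, `C ⊆ Y` being fixed. The move is
small also when viewed through `G`; in the back-and-forth construction `G` is the inverse of the
homeomorphism reached so far. -/
theorem exists_discrete_move {ι : Type u} [Infinite ι] {Y C A : Set (l2Space ι)} (hY : AbsorbsFD Y)
    (hC : LocFDC C) (hCY : C ⊆ Y) (hA : IsDiscreteFDC A) {G : l2Space ι → l2Space ι}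
    (hG : Continuous G) {η : ℝ} (hη : 0 < η) :
    ∃ θ : l2Space ι ≃ₜ l2Space ι, (∀ c ∈ C, θ c = c) ∧ MapsTo θ A Y ∧
      ∀ p, dist (θ p) p < η ∧ dist (G (θ p)) (G p) < η := by
  obtain ⟨I, K, rfl, hK, hd⟩ := hA
  have hr : ∀ i, ∃ r > 0, ∀ j, j ≠ i → ∀ x ∈ K i, ∀ y ∈ K j, r ≤ dist x y := by
    intro i
    have hex : ∀ p, ∃ s > 0, ∀ i j, (K i ∩ Metric.ball p s).Nonempty →
        (K j ∩ Metric.ball p s).Nonempty → i = j := by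
      intro p
      obtain ⟨U, hU, h⟩ := hd p
      obtain ⟨s, hs, hsU⟩ := Metric.mem_nhds_iff.1 hU
      exact ⟨s, hs, fun i j hi hj => h i j (hi.mono (inter_subset_inter_right _ hsU))
        (hj.mono (inter_subset_inter_right _ hsU))⟩
    choose s hs hsd using hex
    obtain ⟨δ, hδ, h⟩ := lebesgue_number_lemma_of_metric (c := fun p => Metric.ball p (s p))
      (hK i).1 (fun p => Metric.isOpen_ball) (fun x _ => mem_iUnion.2 ⟨x, Metric.mem_ball_self (hs x)⟩)
    refine ⟨δ, hδ, fun j hj x hx y hy => ?_⟩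
    by_contra hcon
    obtain ⟨p, hp⟩ := h x hx
    exact hj (hsd p j i ⟨y, hy, hp (by rw [Metric.mem_ball, dist_comm]; exact not_le.1 hcon)⟩
      ⟨x, hx, hp (Metric.mem_ball_self hδ)⟩)
  choose r hr0 hr using hr
  choose δ hδ0 hδ using fun i => (hK i).1.exists_uniform_near hG hη
  let ε : I → ℝ := fun i => min (min η (δ i)) (r i / 4)
  have hε0 : ∀ i, 0 < ε i := fun i => lt_min (lt_min hη (hδ0 i)) (by linarith [hr0 i])
  have hεη : ∀ i, ε i ≤ η := fun i => (min_le_left _ _).trans (min_le_left _ _)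
  have hεδ : ∀ i, ε i ≤ δ i := fun i => (min_le_left _ _).trans (min_le_right _ _)
  have hεr : ∀ i, ε i ≤ r i / 4 := fun i => min_le_right _ _
  choose θ hθC hθK hθs hθn using fun i => exists_compact_move hY hC hCY (hK i) (hε0 i)
  obtain ⟨Θ, hΘ1, hΘ2⟩ := exists_glued_homeomorph (fun i => Metric.thickening (ε i) (K i)) θ hθs (by
    intro p
    obtain ⟨U, hU, h⟩ := hd p
    obtain ⟨s, hs, hsU⟩ := Metric.mem_nhds_iff.1 hU
    refine ⟨Metric.ball p (s / 2), Metric.ball_mem_nhds _ (half_pos hs), ?_⟩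
    rintro i j ⟨q, hq, hqp⟩ ⟨q', hq', hqp'⟩
    by_contra hij
    obtain ⟨x, hx, hxq⟩ := Metric.mem_thickening_iff.1 hq
    obtain ⟨y, hy, hyq⟩ := Metric.mem_thickening_iff.1 hq'
    rw [Metric.mem_ball] at hqp hqp'
    have h1 : dist x p < s / 2 + ε i := by linarith [dist_triangle_left x p q]
    have h2 : dist y p < s / 2 + ε j := by linarith [dist_triangle_left y p q']
    have h3 := dist_triangle_right x y p
    have h4 := hr i j (Ne.symm hij) x hx y hy
    have h5 := hr j i hij y hy x hx
    rw [dist_comm] at h5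
    have h6 := hεr i
    have h7 := hεr j
    exact hij (h i j ⟨x, hx, hsU (by rw [Metric.mem_ball]; linarith)⟩
      ⟨y, hy, hsU (by rw [Metric.mem_ball]; linarith)⟩))
  have hcases : ∀ p, (∃ i, p ∈ Metric.thickening (ε i) (K i) ∧ Θ p = θ i p) ∨ Θ p = p := by
    intro p
    by_cases hex : ∃ i, p ∈ Metric.thickening (ε i) (K i)
    · obtain ⟨i, hi⟩ := hex
      exact Or.inl ⟨i, hi, hΘ1 i p hi⟩
    · push Not at hex
      exact Or.inr (hΘ2 p hex)
  refine ⟨Θ, fun c hc => ?_, fun x hx => ?_, fun p => ?_⟩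
  · rcases hcases c with ⟨i, -, h⟩ | h
    · rw [h, hθC i c hc]
    · exact h
  · obtain ⟨i, hi⟩ := mem_iUnion.1 hx
    rw [hΘ1 i x (Metric.self_subset_thickening (hε0 i) _ hi)]
    exact hθK i hi
  · rcases hcases p with ⟨i, hp, h⟩ | h
    · rw [h]
      exact ⟨(hθn i p).trans_le (hεη i), hδ i p (Metric.thickening_mono (hεδ i) _ hp) _
        ((hθn i p).trans_le (hεδ i))⟩
    · rw [h]; simpa using hη

/-! ### The back-and-forth construction -/

/-- A stage `(H, C)` of the back-and-forth construction: the homeomorphism `H` already matches the part `H⁻¹(C)`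
of `Y` with the part `C` of `Y'`, and `C` is closed and locally a finite-dimensional compactum. -/
def IsStage {ι : Type u} (Y Y' : Set (l2Space ι)) (s : (l2Space ι ≃ₜ l2Space ι) × Set (l2Space ι)) :
    Prop :=
  LocFDC s.2 ∧ s.2 ⊆ Y' ∧ ∀ c ∈ s.2, s.1.symm c ∈ Y

/-- The stage `t` extends the stage `s`: the matched part grows, the matching on it is kept, and the
homeomorphism and its inverse change by less than `η`. -/
def IsNextStage {ι : Type u} (η : ℝ) (s t : (l2Space ι ≃ₜ l2Space ι) × Set (l2Space ι)) : Prop :=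
  s.2 ⊆ t.2 ∧ (∀ c ∈ s.2, t.1.symm c = s.1.symm c) ∧
    (∀ x, dist (t.1 x) (s.1 x) < η) ∧ ∀ y, dist (t.1.symm y) (s.1.symm y) < η

theorem IsNextStage.trans {ι : Type u} {η η' : ℝ}
    {s t r : (l2Space ι ≃ₜ l2Space ι) × Set (l2Space ι)} (h : IsNextStage η s t)
    (h' : IsNextStage η' t r) : IsNextStage (η + η') s r := by
  refine ⟨h.1.trans h'.1, fun c hc => ?_, fun x => ?_, fun y => ?_⟩
  · rw [h'.2.1 c (h.1 hc), h.2.1 c hc]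
  · linarith [h.2.2.1 x, h'.2.2.1 x, dist_triangle (r.1 x) (t.1 x) (s.1 x)]
  · linarith [h.2.2.2 y, h'.2.2.2 y, dist_triangle (r.1.symm y) (t.1.symm y) (s.1.symm y)]

/-- The two sets `Y`, `Y'` play symmetric roles, via passing to the inverse homeomorphism. -/
theorem IsStage.swap {ι : Type u} {Y Y' : Set (l2Space ι)}
    {s : (l2Space ι ≃ₜ l2Space ι) × Set (l2Space ι)} (hs : IsStage Y Y' s) :
    IsStage Y' Y (s.1.symm, s.1.symm '' s.2) := by
  refine ⟨hs.1.image _, ?_, ?_⟩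
  · rintro _ ⟨c, hc, rfl⟩; exact hs.2.2 c hc
  · rintro _ ⟨c, hc, rfl⟩
    change s.1 (s.1.symm c) ∈ Y'
    rw [Homeomorph.apply_symm_apply]
    exact hs.2.1 hc

section step
variable {ι : Type u} [Infinite ι] {Y Y' : Set (l2Space ι)}

theorem IsStage.exists_forth {s : (l2Space ι ≃ₜ l2Space ι) × Set (l2Space ι)} (hs : IsStage Y Y' s)
    (hY' : AbsorbsFD Y') {A : Set (l2Space ι)} (hA : IsDiscreteFDC A) (hAY : A ⊆ Y)
    {η : ℝ} (hη : 0 < η) :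
    ∃ t, IsStage Y Y' t ∧ IsNextStage η s t ∧ t.1 '' A ⊆ t.2 := by
  obtain ⟨H, C⟩ := s
  obtain ⟨hC, hCY, hCH⟩ := hs
  dsimp only at hC hCY hCH
  obtain ⟨θ, hθC, hθA, hθn⟩ := exists_discrete_move hY' hC hCY (hA.image H) H.symm.continuous hη
  have hθC' : ∀ c ∈ C, θ.symm c = c := fun c hc => by
    rw [Homeomorph.symm_apply_eq, hθC c hc]
  refine ⟨(H.trans θ, C ∪ (H.trans θ) '' A), ⟨?_, ?_, ?_⟩, ⟨?_, ?_, ?_, ?_⟩, subset_union_right⟩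
  · exact hC.union (hA.image (H.trans θ)).locFDC
  · refine union_subset hCY ?_
    rintro _ ⟨a, ha, rfl⟩
    exact hθA (mem_image_of_mem _ ha)
  · rintro c (hc | ⟨a, ha, rfl⟩)
    · change H.symm (θ.symm c) ∈ Y
      rw [hθC' c hc]
      exact hCH c hc
    · rw [Homeomorph.symm_apply_apply]
      exact hAY ha
  · exact subset_union_left
  · intro c hc
    change H.symm (θ.symm c) = H.symm c
    rw [hθC' c hc]
  · exact fun x => (hθn (H x)).1
  · intro y
    have := (hθn (θ.symm y)).2
    rw [θ.apply_symm_apply, dist_comm] at this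
    exact this

theorem IsStage.exists_back {s : (l2Space ι ≃ₜ l2Space ι) × Set (l2Space ι)} (hs : IsStage Y Y' s)
    (hY : AbsorbsFD Y) {B : Set (l2Space ι)} (hB : IsDiscreteFDC B) (hBY : B ⊆ Y')
    {η : ℝ} (hη : 0 < η) :
    ∃ t, IsStage Y Y' t ∧ IsNextStage η s t ∧ B ⊆ t.2 := by
  obtain ⟨r, hr, ⟨hsub, hfix, hn1, hn2⟩, hBr⟩ := hs.swap.exists_forth hY hB hBY hη
  have key : ∀ c ∈ s.2, r.1.symm (s.1.symm c) = c := fun c hc => by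
    rw [hfix _ (mem_image_of_mem _ hc)]
    exact s.1.apply_symm_apply c
  refine ⟨(r.1.symm, r.1.symm '' r.2), hr.swap, ⟨?_, ?_, ?_, ?_⟩, ?_⟩
  · intro c hc
    exact ⟨s.1.symm c, hsub (mem_image_of_mem _ hc), key c hc⟩
  · intro c hc
    change r.1 c = s.1.symm c
    have := key c hc
    rw [Homeomorph.symm_apply_eq] at this
    exact this.symm
  · exact hn2
  · exact hn1
  · intro b hb
    exact ⟨r.1 b, hBr (mem_image_of_mem _ hb), r.1.symm_apply_apply b⟩

theorem IsStage.exists_next {s : (l2Space ι ≃ₜ l2Space ι) × Set (l2Space ι)} (hs : IsStage Y Y' s)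
    (hY : AbsorbsFD Y) (hY' : AbsorbsFD Y') {A B : Set (l2Space ι)} (hA : IsDiscreteFDC A)
    (hAY : A ⊆ Y) (hB : IsDiscreteFDC B) (hBY : B ⊆ Y') {η : ℝ} (hη : 0 < η) :
    ∃ t, IsStage Y Y' t ∧ IsNextStage η s t ∧ t.1 '' A ⊆ t.2 ∧ B ⊆ t.2 := by
  obtain ⟨t, ht, hst, hAt⟩ := hs.exists_forth hY' hA hAY (half_pos hη)
  obtain ⟨r, hr, htr, hBr⟩ := ht.exists_back hY hB hBY (half_pos hη)
  refine ⟨r, hr, by simpa using hst.trans htr, ?_, hBr⟩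
  rintro _ ⟨a, ha, rfl⟩
  have h1 : t.1 a ∈ t.2 := hAt (mem_image_of_mem _ ha)
  have h2 := htr.2.1 _ h1
  rw [Homeomorph.symm_apply_apply, Homeomorph.symm_apply_eq] at h2
  rw [← h2]
  exact htr.1 h1

end step

theorem tendstoUniformly_of_geometric {V W : Type*} [MetricSpace W] [CompleteSpace W]
    {f : ℕ → V → W} (hf : ∀ n x, dist (f n x) (f (n + 1) x) ≤ 1 / 2 / 2 ^ n) :
    ∃ g : V → W, TendstoUniformly f g Filter.atTop := by
  have hc : ∀ x, CauchySeq fun n => f n x := fun x =>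
    cauchySeq_of_le_geometric_two fun n => hf n x
  choose g hg using fun x => cauchySeq_tendsto_of_complete (hc x)
  refine ⟨g, Metric.tendstoUniformly_iff.2 fun ε hε => ?_⟩
  obtain ⟨N, hN⟩ := exists_pow_lt_of_lt_one hε (show (1 / 2 : ℝ) < 1 by norm_num)
  filter_upwards [Filter.eventually_ge_atTop N] with n hn x
  have h1 := dist_le_of_le_geometric_two_of_tendsto (fun n => hf n x) (hg x) n
  rw [dist_comm]
  refine h1.trans_lt (lt_of_le_of_lt ?_ hN)
  rw [one_div_pow]
  have : (2 : ℝ) ^ N ≤ 2 ^ n := pow_le_pow_right₀ (by norm_num) hn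
  gcongr

/-- Any two absorbing sets with σ-discrete decompositions into finite-dimensional compacta are exchanged by a
homeomorphism of `ℓ₂`, the uniform limit of a sequence of stages. -/
theorem exists_pair_homeomorph {ι : Type u} [Infinite ι] {Y Y' : Set (l2Space ι)}
    (hY : AbsorbsFD Y) (hY' : AbsorbsFD Y')
    (hA : ∃ A : ℕ → Set (l2Space ι), Y = ⋃ n, A n ∧ ∀ n, IsDiscreteFDC (A n))
    (hB : ∃ B : ℕ → Set (l2Space ι), Y' = ⋃ n, B n ∧ ∀ n, IsDiscreteFDC (B n)) :
    ∃ H : l2Space ι ≃ₜ l2Space ι, H '' Y = Y' := by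
  obtain ⟨A, hAY, hA⟩ := hA
  obtain ⟨B, hBY, hB⟩ := hB
  have hstep : ∀ (n : ℕ) (s : {s // IsStage Y Y' s}), ∃ t : {s // IsStage Y Y' s},
      IsNextStage (1 / 2 / 2 ^ n) s.1 t.1 ∧ t.1.1 '' A n ⊆ t.1.2 ∧ B n ⊆ t.1.2 := by
    intro n s
    obtain ⟨t, ht, h⟩ := s.2.exists_next hY hY' (hA n) (hAY ▸ subset_iUnion A n) (hB n)
      (hBY ▸ subset_iUnion B n) (η := 1 / 2 / 2 ^ n) (by positivity)
    exact ⟨⟨t, ht⟩, h⟩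
  choose next hnext using hstep
  let S : ℕ → {s // IsStage Y Y' s} := fun n => Nat.rec
    ⟨(Homeomorph.refl _, ∅), LocFDC.empty, empty_subset _, by simp⟩ (fun n s => next n s) n
  let H : ℕ → l2Space ι ≃ₜ l2Space ι := fun n => (S n).1.1
  let C : ℕ → Set (l2Space ι) := fun n => (S n).1.2
  have hS : ∀ n, IsNextStage (1 / 2 / 2 ^ n) (S n).1 (S (n + 1)).1 := fun n => (hnext n (S n)).1
  have hSA : ∀ n, H (n + 1) '' A n ⊆ C (n + 1) := fun n => (hnext n (S n)).2.1
  have hSB : ∀ n, B n ⊆ C (n + 1) := fun n => (hnext n (S n)).2.2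
  have hpersist : ∀ n, ∀ c ∈ C n, ∀ k ≥ n, c ∈ C k ∧ (H k).symm c = (H n).symm c := by
    intro n c hc k hk
    induction k, hk using Nat.le_induction with
    | base => exact ⟨hc, rfl⟩
    | succ k _ ih => exact ⟨(hS k).1 ih.1, ((hS k).2.1 c ih.1).trans ih.2⟩
  obtain ⟨h, hh⟩ := tendstoUniformly_of_geometric (f := fun n => H n) (fun n x => by
    rw [dist_comm]; exact ((hS n).2.2.1 x).le)
  obtain ⟨g, hg⟩ := tendstoUniformly_of_geometric (f := fun n => (H n).symm) (fun n x => by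
    rw [dist_comm]; exact ((hS n).2.2.2 x).le)
  have hhc : Continuous h := hh.continuous (Filter.Frequently.of_forall fun n => (H n).continuous)
  have hgc : Continuous g := hg.continuous
    (Filter.Frequently.of_forall fun n => (H n).symm.continuous)
  have hgh : ∀ x, g (h x) = x := fun x => by
    have h1 := hg.tendsto_comp hgc.continuousAt (hh.tendsto_at x)
    simp only [Homeomorph.symm_apply_apply] at h1
    exact (tendsto_nhds_unique h1 tendsto_const_nhds)
  have hhg : ∀ x, h (g x) = x := fun x => by
    have h1 := hh.tendsto_comp hhc.continuousAt (hg.tendsto_at x)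
    simp only [Homeomorph.apply_symm_apply] at h1
    exact (tendsto_nhds_unique h1 tendsto_const_nhds)
  have hgC : ∀ n, ∀ c ∈ C n, g c = (H n).symm c := by
    intro n c hc
    refine tendsto_nhds_unique (hg.tendsto_at c) (tendsto_const_nhds.congr' ?_)
    filter_upwards [Filter.eventually_ge_atTop n] with k hk
    exact (hpersist n c hc k hk).2.symm
  refine ⟨⟨⟨h, g, hgh, hhg⟩, hhc, hgc⟩, ?_⟩
  change h '' Y = Y'
  ext y
  constructor
  · rintro ⟨x, hx, rfl⟩
    rw [hAY, mem_iUnion] at hx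
    obtain ⟨n, hn⟩ := hx
    have hc := hSA n (mem_image_of_mem _ hn)
    have h1 := hgC (n + 1) _ hc
    rw [Homeomorph.symm_apply_apply] at h1
    rw [← h1, hhg]
    exact (S (n + 1)).2.2.1 hc
  · intro hy
    have hy' := hy
    rw [hBY, mem_iUnion] at hy'
    obtain ⟨n, hn⟩ := hy'
    refine ⟨g y, ?_, hhg y⟩
    rw [hgC (n + 1) y (hSB n hn)]
    exact (S (n + 1)).2.2.2 y (hSB n hn)

/-! ### Transport along homeomorphisms and conclusion -/

theorem TopFinDim.of_homeomorph {A X : Type*} [TopologicalSpace A] [TopologicalSpace X]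
    (e : A ≃ₜ X) (h : TopFinDim X) : TopFinDim A := by
  obtain ⟨n, hn⟩ := h
  exact ⟨n, hn.of_isClosedEmbedding e.isClosedEmbedding⟩

theorem exists_decomposition_image {X Z : Type*} [TopologicalSpace X] [TopologicalSpace Z]
    (e : X ≃ₜ Z) {Y : Set X}
    (h : ∃ F : ℕ → Set X, Y = ⋃ n, F n ∧ ∀ n, TopFinDim ↥(F n) ∧ LocallyCompactSpace ↥(F n)) :
    ∃ F : ℕ → Set Z, e '' Y = ⋃ n, F n ∧ ∀ n, TopFinDim ↥(F n) ∧ LocallyCompactSpace ↥(F n) := by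
  obtain ⟨F, rfl, hF⟩ := h
  refine ⟨fun n => e '' F n, image_iUnion, fun n => ⟨(hF n).1.of_homeomorph (e.image (F n)).symm, ?_⟩⟩
  have := (hF n).2
  exact (e.image (F n)).symm.isClosedEmbedding.locallyCompactSpace

/-- Absorption of finite-dimensional compacta in topological terms, with nearness measured by open covers. -/
def AbsorbsFDTop {X : Type*} [TopologicalSpace X] (Y : Set X) : Prop :=
  ∀ K : Set X, IsCompact K → TopFinDim ↥K →
    ∀ B : Set X, IsCompact B → B ⊆ K ∩ Y →
    ∀ 𝒰 : Set (Set X), IsOpenCover 𝒰 →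
      ∃ h : ↥K → X, Topology.IsEmbedding h ∧ Set.range h ⊆ Y ∧
        (∀ k : ↥K, (k : X) ∈ B → h k = (k : X)) ∧
        (∀ k : ↥K, ∃ U ∈ 𝒰, h k ∈ U ∧ (k : X) ∈ U)

/-- A Lebesgue number of the open cover along the compact set `K` turns metric nearness into nearness with
respect to the cover. -/
theorem AbsorbsFD.absorbsFDTop {X V : Type*} [TopologicalSpace X] [MetricSpace V] (e : X ≃ₜ V)
    {Y : Set X} (h : AbsorbsFD (e '' Y)) : AbsorbsFDTop Y := by
  intro K hK hKd B hB hBK 𝒰 h𝒰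
  have : T2Space X := e.isEmbedding.t2Space
  have : CompactSpace K := isCompact_iff_compactSpace.1 hK
  have hK' : IsCompact (e '' K) := hK.image e.continuous
  have hFDC : FDC (e '' K) := .of_topFinDim hK' (hKd.of_homeomorph (e.image K).symm)
  obtain ⟨δ, hδ, hL⟩ := lebesgue_number_lemma_of_metric_sUnion hK'
    (c := (fun U => e.symm ⁻¹' U) '' 𝒰)
    (by rintro _ ⟨U, hU, rfl⟩; exact (h𝒰.1 U hU).preimage e.symm.continuous)
    (by
      rw [(IsOpenCover.comap e.symm.continuous h𝒰).2]
      exact subset_univ _)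
  obtain ⟨g, hgc, hgi, hgY, hgB, hgn⟩ := h (e '' K) hFDC (e '' B)
    (image_mono fun b hb => (hBK hb).1) (hB.image e.continuous)
    (image_mono fun b hb => (hBK hb).2) (δ / 2) (half_pos hδ)
  have hm : ∀ k : K, e k ∈ e '' K := fun k => mem_image_of_mem _ k.2
  refine ⟨fun k => e.symm (g (e k)), ?_, ?_, ?_, ?_⟩
  · refine (Continuous.isClosedEmbedding ?_ ?_).isEmbedding
    · exact e.symm.continuous.comp
        (hgc.comp_continuous (e.continuous.comp continuous_subtype_val) hm)
    · intro k l hkl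
      exact Subtype.ext (e.injective (hgi (hm k) (hm l) (e.symm.injective hkl)))
  · rintro _ ⟨k, rfl⟩
    obtain ⟨y, hy, hye⟩ := hgY (hm k)
    change e.symm (g (e k)) ∈ Y
    rw [← hye, e.symm_apply_apply]
    exact hy
  · intro k hk
    change e.symm (g (e k)) = k
    rw [hgB _ (mem_image_of_mem _ hk), e.symm_apply_apply]
  · intro k
    obtain ⟨_, ⟨U, hU, rfl⟩, hball⟩ := hL (e k) (hm k)
    refine ⟨U, hU, hball ?_, ?_⟩
    · rw [Metric.mem_ball]
      linarith [hgn _ (hm k)]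
    · have := hball (Metric.mem_ball_self hδ)
      rwa [mem_preimage, e.symm_apply_apply] at this

open Classical in
/-- Metric nearness is nearness with respect to the cover by small balls. -/
theorem AbsorbsFDTop.absorbsFD {X V : Type*} [TopologicalSpace X] [MetricSpace V] (e : X ≃ₜ V)
    {Y : Set X} (h : AbsorbsFDTop Y) : AbsorbsFD (e '' Y) := by
  intro K hK B hBK hB hBY ε hε
  have hsub : e.symm '' B ⊆ e.symm '' K ∩ Y := by
    rintro _ ⟨b, hb, rfl⟩
    refine ⟨mem_image_of_mem _ (hBK hb), ?_⟩
    obtain ⟨y, hy, rfl⟩ := hBY hb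
    rwa [e.symm_apply_apply]
  obtain ⟨g, hge, hgY, hgB, hgn⟩ := h (e.symm '' K) (hK.1.image e.symm.continuous)
    (hK.topFinDim.of_homeomorph (e.symm.image K).symm) (e.symm '' B)
    (hB.image e.symm.continuous) hsub (range fun x => e ⁻¹' Metric.ball x (ε / 2))
    ⟨by rintro _ ⟨x, rfl⟩; exact Metric.isOpen_ball.preimage e.continuous,
      eq_univ_of_forall fun x => ⟨_, ⟨e x, rfl⟩, Metric.mem_ball_self (half_pos hε)⟩⟩
  let p : K → ↥(e.symm '' K) := fun k => ⟨e.symm k, mem_image_of_mem _ k.2⟩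
  have hp : Continuous p := by fun_prop
  let f : V → V := fun x => if hx : x ∈ K then e (g (p ⟨x, hx⟩)) else x
  have hf : ∀ x (hx : x ∈ K), f x = e (g (p ⟨x, hx⟩)) := fun x hx => dif_pos hx
  refine ⟨f, ?_, ?_, ?_, ?_, ?_⟩
  · rw [continuousOn_iff_continuous_domRestrict]
    have : K.domRestrict f = fun k => e (g (p k)) := funext fun k => hf k k.2
    rw [this]
    exact e.continuous.comp (hge.continuous.comp hp)
  · intro x hx y hy hxy
    rw [hf x hx, hf y hy] at hxy
    exact e.symm.injective (congrArg Subtype.val (hge.injective (e.injective hxy)))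
  · intro x hx
    rw [hf x hx]
    exact mem_image_of_mem _ (hgY (mem_range_self _))
  · intro x hx
    rw [hf x (hBK hx), hgB _ (mem_image_of_mem _ hx)]
    exact e.apply_symm_apply x
  · intro x hx
    obtain ⟨_, ⟨z, rfl⟩, h1, h2⟩ := hgn (p ⟨x, hx⟩)
    have h3 : e (p ⟨x, hx⟩ : X) = x := e.apply_symm_apply x
    rw [mem_preimage, Metric.mem_ball] at h1 h2
    rw [h3] at h2
    rw [hf x hx]
    linarith [dist_triangle_right (e (g (p ⟨x, hx⟩))) x z]

/-- (West) A pair `(X, Y)` with `Y ⊆ X` is homeomorphic to the pair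
`(ℓ₂(κ), ℓ₂ᶠ(κ))` for an infinite cardinal `κ` if and only if
(1) `X` is homeomorphic to `ℓ₂(κ)`, (2) `Y` is a countable union of
finite-dimensional locally compact spaces, and (3) `Y` absorbs
finite-dimensional compact subsets of `X`. -/
theorem pair_homeomorph_l2_l2fin_iff_west
    {X : Type u} [TopologicalSpace X] (Y : Set X)
    (κ : Cardinal.{u}) (hκ : Cardinal.aleph0 ≤ κ) :
    (∃ h : X ≃ₜ l2Space κ.out, (fun x => h x) '' Y = l2fin κ.out) ↔
      (Nonempty (X ≃ₜ l2Space κ.out) ∧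
        (∃ F : ℕ → Set X, Y = ⋃ n, F n ∧
          ∀ n, TopFinDim ↥(F n) ∧ LocallyCompactSpace ↥(F n)) ∧
        (∀ K : Set X, IsCompact K → TopFinDim ↥K →
          ∀ B : Set X, IsCompact B → B ⊆ K ∩ Y →
          ∀ 𝒰 : Set (Set X), IsOpenCover 𝒰 →
            ∃ h : ↥K → X, Topology.IsEmbedding h ∧ Set.range h ⊆ Y ∧
              (∀ k : ↥K, (k : X) ∈ B → h k = (k : X)) ∧
              (∀ k : ↥K, ∃ U ∈ 𝒰, h k ∈ U ∧ (k : X) ∈ U))) := by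
  have : Infinite κ.out := by rwa [Cardinal.infinite_iff, Cardinal.mk_out]
  constructor
  · rintro ⟨e, he⟩
    have he' : e.symm '' l2fin κ.out = Y := by
      rw [← he]
      exact e.symm_image_image Y
    refine ⟨⟨e⟩, ?_, ?_⟩
    · have := exists_decomposition_image e.symm (l2fin_decomposition κ.out)
      rwa [he'] at this
    · exact AbsorbsFD.absorbsFDTop e (he ▸ l2fin_absorbsFD κ.out)
  · rintro ⟨⟨e⟩, hF, habs⟩
    obtain ⟨H, hH⟩ := exists_pair_homeomorph (AbsorbsFDTop.absorbsFD e habs)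
      (l2fin_absorbsFD κ.out) (exists_sigma_discrete (exists_decomposition_image e hF))
      (exists_sigma_discrete (l2fin_decomposition κ.out))
    refine ⟨e.trans H, ?_⟩
    rw [← hH, image_image]
    rfl
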